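/- arXiv:2201.04514 — 2 statements merged into one kernel-verified Lean document; each statement's English description precedes it below -/
import Mathlib

section
/- (Uniform moment bounds for the equilibrium fluctuation field; static version of Proposition 2.3, estimate (7.2).) Let d ≥ 2. For every integer p ≥ 1 there exists a constant C_p > 0, depending only on p and d, such that for all sufficiently small ε > 0 and every bounded measurable h : 𝕋^d × ℝ^d → ℝ, | 𝔼^eq_ε[ (ζ^{ε,eq}(h))^p ] | ≤ C_p ‖h‖_{L^∞}^p. -/
open MeasureTheory Real

noncomputable section

/-- The unit `d`-dimensional torus. -/
abbrev Torus (d : ℕ) := Fin d → AddCircle (1 : ℝ)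

/-- The one-particle phase space `𝕋^d × ℝ^d`. -/
abbrev Phase (d : ℕ) := Torus d × EuclideanSpace ℝ (Fin d)

/-- The flat (Euclidean) distance on the torus. -/
noncomputable def torusDist {d : ℕ} (x y : Torus d) : ℝ :=
  Real.sqrt (∑ i, dist (x i) (y i) ^ 2)

/-- The Maxwellian `𝓜(v) = (2π)^{-d/2} exp(-|v|²/2)`. -/
noncomputable def maxwellian {d : ℕ} (v : EuclideanSpace ℝ (Fin d)) : ℝ :=
  (2 * π) ^ (-(d : ℝ) / 2) * Real.exp (-‖v‖ ^ 2 / 2)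

/- The hard-sphere exclusion indicator `1_{𝒟^ε_N}` (as a function of the positions). -/
open Classical in
noncomputable def exclInd {d : ℕ} (ε : ℝ) {N : ℕ} (X : Fin N → Torus d) : ℝ :=
  if ∀ i j : Fin N, i ≠ j → ε < torusDist (X i) (X j) then 1 else 0

/-- The Boltzmann–Grad scaling factor `μ_ε = ε^{-(d-1)}`. -/
noncomputable def muBG (d : ℕ) (ε : ℝ) : ℝ := (ε ^ (d - 1))⁻¹

/-- The grand canonical partition function
`𝒵^ε = ∑_N (μ_ε^N / N!) ∫ ∏_{i≠j} 1_{|x_i - x_j| > ε} dX_N` (the `N = 0` term equals `1`). -/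
noncomputable def partitionZ (d : ℕ) (ε : ℝ) : ℝ :=
  ∑' N : ℕ, muBG d ε ^ N / (Nat.factorial N : ℝ) * ∫ X : Fin N → Torus d, exclInd ε X

/-- The grand canonical equilibrium expectation of a functional
`F : ⨆_N (𝕋^d × ℝ^d)^N → ℝ`. -/
noncomputable def gceExp (d : ℕ) (ε : ℝ) (F : (N : ℕ) → (Fin N → Phase d) → ℝ) : ℝ :=
  (partitionZ d ε)⁻¹ *
    ∑' N : ℕ, muBG d ε ^ N / (Nat.factorial N : ℝ) *
      ∫ Z : Fin N → Phase d,
        exclInd ε (fun i => (Z i).1) * (∏ i, maxwellian (Z i).2) * F N Z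

/-- The empirical density `π^ε(h) = μ_ε^{-1} ∑_i h(z_i)`. -/
noncomputable def empDens {d : ℕ} (ε : ℝ) (h : Phase d → ℝ) (N : ℕ)
    (Z : Fin N → Phase d) : ℝ :=
  (muBG d ε)⁻¹ * ∑ i, h (Z i)

/-- The equilibrium fluctuation field `ζ^{ε,eq}(h) = √μ_ε (π ^ε(h) - 𝔼^eq_ε[π^ε(h)])`. -/
noncomputable def fluctField (d : ℕ) (ε : ℝ) (h : Phase d → ℝ) (N : ℕ)
    (Z : Fin N → Phase d) : ℝ :=
  Real.sqrt (muBG d ε) * (empDens ε h N Z - gceExp d ε (fun M W => empDens ε h M W))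

end

/-!
The derivative of the logarithm of the grand canonical partition function in the direction of an
activity `ψ` is, by the Mecke formula, the integral of `ψ` against the insertion ratio
`r_φ x = Z(φ thinned around x) / Z(φ)`. Fading the activity out of the region excluded by `x` turns
this into the self-consistency relation
`log (r_φ x) = -∫₀¹ ∫_{excluded x} φ * r_{φ faded by t} dt`.
If the activity of every excluded region is at most `q < 1`, this relation is a contraction: two
activities that agree up to a factor `exp a` have insertion ratios that agree up to a factor
`exp (q * a / (1 - q))`. This replaces the cluster expansion.

For a bounded `g`, the logarithm of the Laplace transform of the linear statistic of `g` is the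
increment of `log Z` along the tilted activities `φ * exp (s * g)`. The Lipschitz bound on the
insertion ratio shows that it stays within `O(‖g‖² * ∫ φ)` of its tangent, whose slope is the mean.
With `g = h / √μ_ε` the error is of order one, so the exponential moments of the fluctuation field
are bounded uniformly in `ε`, and `|x| ^ p ≤ p! * (exp x + exp (-x))` bounds its moments.
For hard spheres the activity of an excluded region is at most `μ_ε * (2 * ε) ^ d = 2 ^ d * ε`.
-/

namespace PairExclusion

noncomputable section ConfigurationSpace

lemma measurableEmbedding_sigmaMk {ι : Type*} {Y : ι → Type*} [∀ i, MeasurableSpace (Y i)]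
    (i : ι) : MeasurableEmbedding (Sigma.mk i : Y i → Σ i, Y i) where
  injective := sigma_mk_injective
  measurable := Measurable.of_le_map (iInf_le _ i)
  measurableSet_image' := by
    intro s hs
    refine MeasurableSpace.measurableSet_iInf.2 fun j => ?_
    change MeasurableSet (Sigma.mk j ⁻¹' (Sigma.mk i '' s))
    rcases eq_or_ne i j with rfl | hij
    · rwa [Set.preimage_image_eq _ sigma_mk_injective]
    · simp [Set.preimage_image_sigmaMk_of_ne hij.symm]

lemma measurable_prod_sigma {ι X Z : Type*} {Y : ι → Type*} [Countable ι] [MeasurableSpace X]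
    [MeasurableSpace Z] [∀ i, MeasurableSpace (Y i)] {f : X × (Σ i, Y i) → Z}
    (hf : ∀ i, Measurable fun p : X × Y i => f (p.1, ⟨i, p.2⟩)) : Measurable f := by
  intro s hs
  have slices : f ⁻¹' s =
      ⋃ i, Prod.map id (Sigma.mk i) '' ((fun p : X × Y i => f (p.1, ⟨i, p.2⟩)) ⁻¹' s) := by
    ext ⟨x, i, y⟩
    simp only [Set.mem_preimage, Set.mem_iUnion, Set.mem_image, Prod.exists, Prod.map_apply, id]
    refine ⟨fun h => ⟨i, x, y, h, rfl⟩, ?_⟩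
    rintro ⟨j, x', y', h, heq⟩
    rwa [← heq]
  rw [slices]
  exact .iUnion fun i =>
    (MeasurableEmbedding.id.prodMap (measurableEmbedding_sigmaMk i)).measurableSet_image' (hf i hs)

/-- Finite ordered configurations of particles in `E`: the particle number, and their states. -/
abbrev Config (E : Type*) := Σ N : ℕ, Fin N → E

variable {E : Type*} [MeasurableSpace E] {P : Measure E}

/-- The Lebesgue-Poisson measure `∑ N, P^{⊗N} / N!` on finite configurations, with respect to which
grand canonical Gibbs measures have a density. -/
def lebesguePoisson (P : Measure E) : Measure (Config E) :=
  .sum fun N => (Nat.factorial N : ENNReal)⁻¹ • (Measure.pi fun _ : Fin N => P).map (Sigma.mk N)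

instance [SigmaFinite P] : SFinite (lebesguePoisson P) := by
  unfold lebesguePoisson
  infer_instance

lemma hasSum_integral_lebesguePoisson {F : Config E → ℝ} (hF : Integrable F (lebesguePoisson P)) :
    HasSum (fun N => (Nat.factorial N : ℝ)⁻¹ * ∫ Z, F ⟨N, Z⟩ ∂Measure.pi fun _ : Fin N => P)
      (∫ ω, F ω ∂lebesguePoisson P) := by
  convert! hasSum_integral_measure hF using 2 with N
  rw [integral_smul_measure, (measurableEmbedding_sigmaMk N).integral_map]
  simp

lemma integrable_prod_lebesguePoisson [SigmaFinite P] {ρ : E → ℝ} (hρ : Integrable ρ P) :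
    Integrable (fun ω : Config E => ∏ i, ρ (ω.2 i)) (lebesguePoisson P) := by
  refine integrable_sum_measure (fun N => ?_) ?_
  · refine Integrable.smul_measure ?_ (by simp [Nat.factorial_ne_zero])
    rw [(measurableEmbedding_sigmaMk N).integrable_map_iff]
    exact Integrable.fin_nat_prod fun _ => hρ
  · convert Real.summable_pow_div_factorial (∫ x, ‖ρ x‖ ∂P) using 2 with N
    rw [integral_smul_measure, (measurableEmbedding_sigmaMk N).integral_map]
    simp only [norm_prod]
    rw [integral_fintype_prod_eq_pow fun x => ‖ρ x‖]
    simp [div_eq_inv_mul]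

end ConfigurationSpace

noncomputable section Weight

variable {E : Type*} {A : E → E → Prop} {φ ψ ρ : E → ℝ}

/-- The configurations in which any two distinct particles are related by `A`; for hard spheres
`A` says that the particles are at distance greater than `ε`. -/
def admissible (A : E → E → Prop) : Set (Config E) :=
  {ω | Pairwise (Function.onFun A ω.2)}

/-- The unnormalised density of the grand canonical ensemble with pair exclusion `A` and activity
`φ`, with respect to the Lebesgue-Poisson measure. -/
def weight (A : E → E → Prop) (φ : E → ℝ) : Config E → ℝ :=
  (admissible A).indicator fun ω => ∏ i, φ (ω.2 i)

/-- The derivative of `weight A` at `φ` in the direction `ψ`. -/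
def weightDeriv (A : E → E → Prop) (φ ψ : E → ℝ) : Config E → ℝ :=
  (admissible A).indicator fun ω => ∑ i, (∏ j ∈ Finset.univ.erase i, φ (ω.2 j)) * ψ (ω.2 i)

/-- The activity `φ` thinned by a particle at `x`: it vanishes wherever that particle excludes
another one. -/
def thinned (A : E → E → Prop) (x : E) (φ : E → ℝ) : E → ℝ :=
  {y | A x y}.indicator φ

/-- The linear statistic `∑ i, h (z i)` of a configuration. -/
def linearStatistic (h : E → ℝ) (ω : Config E) : ℝ :=
  ∑ i, h (ω.2 i)

lemma abs_thinned_le (h : ∀ z, |φ z| ≤ ρ z) (x z : E) : |thinned A x φ z| ≤ ρ z :=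
  (norm_indicator_le_norm_self φ z).trans (h z)

lemma abs_weight_le (h : ∀ z, |φ z| ≤ ρ z) (ω : Config E) : |weight A φ ω| ≤ ∏ i, ρ (ω.2 i) :=
  calc |weight A φ ω| ≤ |∏ i, φ (ω.2 i)| := by
        unfold weight
        exact norm_indicator_le_norm_self (E := ℝ) _ ω
    _ ≤ ∏ i, ρ (ω.2 i) := by
        rw [Finset.abs_prod]
        exact Finset.prod_le_prod (fun _ _ => abs_nonneg _) fun i _ => h (ω.2 i)

lemma weight_nonneg (h : ∀ z, 0 ≤ φ z) (ω : Config E) : 0 ≤ weight A φ ω :=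
  Set.indicator_nonneg (fun ω _ => Finset.prod_nonneg fun i _ => h (ω.2 i)) ω

lemma weight_mono (h₀ : ∀ z, 0 ≤ φ z) (h : ∀ z, φ z ≤ ψ z) (ω : Config E) :
    weight A φ ω ≤ weight A ψ ω :=
  Set.indicator_le_indicator (Finset.prod_le_prod (fun i _ => h₀ (ω.2 i)) fun i _ => h (ω.2 i))

lemma weight_zero (Z : Fin 0 → E) : weight A φ ⟨0, Z⟩ = 1 := by
  simp [weight, admissible, Pairwise]

lemma weightDeriv_zero (Z : Fin 0 → E) : weightDeriv A φ ψ ⟨0, Z⟩ = 0 := by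
  unfold weightDeriv
  simp

lemma weightDeriv_mul (h : E → ℝ) (ω : Config E) :
    weightDeriv A φ (fun z => φ z * h z) ω = weight A φ ω * linearStatistic h ω := by
  by_cases hω : ω ∈ admissible A
  · simp only [weightDeriv, weight, linearStatistic, Set.indicator_of_mem hω, Finset.mul_sum,
      ← mul_assoc]
    exact Finset.sum_congr rfl fun i hi => by rw [Finset.prod_erase_mul _ _ hi]
  · simp [weight, weightDeriv, hω]

lemma mem_admissible_succ_iff (hsymm : ∀ x y, A x y → A y x) {N : ℕ} (Z : Fin (N + 1) → E)
    (i : Fin (N + 1)) : ⟨N + 1, Z⟩ ∈ admissible A ↔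
      (∀ j, A (Z i) (i.removeNth Z j)) ∧ ⟨N, i.removeNth Z⟩ ∈ admissible A := by
  have hcomm : ∀ x y, A x y ↔ A y x := fun x y => ⟨hsymm x y, hsymm y x⟩
  simp only [admissible, Set.mem_ofPred_eq, Pairwise, Function.onFun, Fin.removeNth,
    i.forall_iff_succAbove, ne_eq, not_true_eq_false, false_imp_iff, true_and,
    Fin.succAbove_ne, (Fin.succAbove_ne _ _).symm, not_false_eq_true, true_imp_iff,
    Fin.succAbove_right_inj, forall_and, hcomm _ (Z i), ← and_assoc, and_self]

lemma weight_thinned {N : ℕ} {x : E} {Z : Fin N → E} (h : ∀ j, A x (Z j)) :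
    weight A (thinned A x φ) ⟨N, Z⟩ = weight A φ ⟨N, Z⟩ := by
  classical
  have hprod : ∏ i, thinned A x φ (Z i) = ∏ i, φ (Z i) :=
    Finset.prod_congr rfl fun i _ => Set.indicator_of_mem (h i) φ
  simp only [weight, Set.indicator_apply, hprod]

lemma weight_thinned_eq_zero {N : ℕ} {x : E} {Z : Fin N → E} (h : ¬ ∀ j, A x (Z j)) :
    weight A (thinned A x φ) ⟨N, Z⟩ = 0 := by
  obtain ⟨j, hj⟩ := not_forall.1 h
  refine Set.indicator_apply_eq_zero.2 fun _ => Finset.prod_eq_zero (Finset.mem_univ j) ?_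
  exact Set.indicator_of_notMem hj φ

lemma weightDeriv_succ (hsymm : ∀ x y, A x y → A y x) {N : ℕ} (Z : Fin (N + 1) → E) :
    weightDeriv A φ ψ ⟨N + 1, Z⟩ =
      ∑ i, ψ (Z i) * weight A (thinned A (Z i) φ) ⟨N, i.removeNth Z⟩ := by
  by_cases hZ : ⟨N + 1, Z⟩ ∈ admissible A
  · rw [weightDeriv, Set.indicator_of_mem hZ]
    refine Finset.sum_congr rfl fun i _ => ?_
    obtain ⟨hi, hrest⟩ := (mem_admissible_succ_iff hsymm Z i).1 hZ
    rw [weight_thinned hi, weight, Set.indicator_of_mem hrest, mul_comm, ← Finset.compl_singleton,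
      ← Fin.image_succAbove_univ, Finset.prod_image Fin.succAbove_right_injective.injOn]
    rfl
  · rw [weightDeriv, Set.indicator_of_notMem hZ, Finset.sum_eq_zero fun i _ => ?_]
    by_cases hi : ∀ j, A (Z i) (i.removeNth Z j)
    · have hrest := fun h => hZ ((mem_admissible_succ_iff hsymm Z i).2 ⟨hi, h⟩)
      rw [weight_thinned hi, weight, Set.indicator_of_notMem hrest, mul_zero]
    · rw [weight_thinned_eq_zero hi, mul_zero]

lemma abs_weightDeriv_le (hφ : ∀ z, |φ z| ≤ ρ z) (hψ : ∀ z, |ψ z| ≤ ρ z) (ω : Config E) :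
    |weightDeriv A φ ψ ω| ≤ ∏ i, 2 * ρ (ω.2 i) := by
  have hρ : ∀ z, 0 ≤ ρ z := fun z => (abs_nonneg _).trans (hφ z)
  have term_le (i) : |(∏ j ∈ Finset.univ.erase i, φ (ω.2 j)) * ψ (ω.2 i)| ≤ ∏ j, ρ (ω.2 j) := by
    rw [abs_mul, Finset.abs_prod, ← Finset.prod_erase_mul _ _ (Finset.mem_univ i)]
    gcongr with j
    · exact Finset.prod_nonneg fun j _ => hρ _
    · exact hφ _
    · exact hψ _
  calc |weightDeriv A φ ψ ω|
      ≤ |∑ i, (∏ j ∈ Finset.univ.erase i, φ (ω.2 j)) * ψ (ω.2 i)| := by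
        unfold weightDeriv
        exact norm_indicator_le_norm_self (E := ℝ) _ ω
    _ ≤ ∑ _i : Fin ω.1, ∏ j, ρ (ω.2 j) :=
        (Finset.abs_sum_le_sum_abs _ _).trans (Finset.sum_le_sum fun i _ => term_le i)
    _ = ω.1 * ∏ j, ρ (ω.2 j) := by simp
    _ ≤ 2 ^ ω.1 * ∏ j, ρ (ω.2 j) := by
        gcongr
        · exact Finset.prod_nonneg fun j _ => hρ _
        · exact_mod_cast Nat.lt_two_pow_self.le
    _ = ∏ i, 2 * ρ (ω.2 i) := by simp [Finset.prod_mul_distrib]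

lemma abs_insertParticle_le (hφ : ∀ z, |φ z| ≤ ρ z) (hψ : ∀ z, |ψ z| ≤ ρ z) (x : E)
    (ω : Config E) : |ψ x * weight A (thinned A x φ) ω| ≤ ρ x * ∏ i, ρ (ω.2 i) := by
  rw [abs_mul]
  exact mul_le_mul (hψ x) (abs_weight_le (abs_thinned_le hφ x) ω) (abs_nonneg _)
    ((abs_nonneg _).trans (hψ x))

lemma hasDerivAt_weight {φ : ℝ → E → ℝ} {φ' : E → ℝ} {s : ℝ}
    (h : ∀ z, HasDerivAt (fun t => φ t z) (φ' z) s) (ω : Config E) :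
    HasDerivAt (fun t => weight A (φ t) ω) (weightDeriv A (φ s) φ' ω) s := by
  by_cases hω : ω ∈ admissible A
  · simpa only [weight, weightDeriv, Set.indicator_of_mem hω, smul_eq_mul] using
      HasDerivAt.fun_finsetProd fun i _ => h (ω.2 i)
  · simpa only [weight, weightDeriv, Set.indicator_of_notMem hω] using hasDerivAt_const s (0 : ℝ)

end Weight

noncomputable section Partition

variable {E : Type*} [MeasurableSpace E] {P : Measure E} {A : E → E → Prop} {φ ψ ρ : E → ℝ}

/-- The grand canonical partition function with pair exclusion `A` and activity `φ`. -/
def partition (P : Measure E) (A : E → E → Prop) (φ : E → ℝ) : ℝ :=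
  ∫ ω, weight A φ ω ∂lebesguePoisson P

lemma measurableSet_admissible (hA : MeasurableSet {p : E × E | A p.1 p.2}) :
    MeasurableSet (admissible A) := by
  refine MeasurableSpace.measurableSet_iInf.2 fun N => ?_
  change MeasurableSet {Z : Fin N → E | ∀ i j, i ≠ j → A (Z i) (Z j)}
  simp only [Set.ofPred_forall]
  exact .iInter fun i => .iInter fun j => .iInter fun _ =>
    (show Measurable fun Z : Fin N → E => (Z i, Z j) by fun_prop) hA

lemma measurable_thinned (hA : MeasurableSet {p : E × E | A p.1 p.2}) (hφ : Measurable φ) (x : E) :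
    Measurable (thinned A x φ) :=
  hφ.indicator (measurable_prodMk_left hA)

lemma measurable_thinned_uncurry (hA : MeasurableSet {p : E × E | A p.1 p.2})
    (hφ : Measurable φ) : Measurable fun p : E × E => thinned A p.1 φ p.2 :=
  (hφ.comp measurable_snd).indicator hA

lemma measurable_weight_uncurry {X : Type*} [MeasurableSpace X]
    (hA : MeasurableSet {p : E × E | A p.1 p.2}) {Φ : X → E → ℝ}
    (hΦ : Measurable fun p : X × E => Φ p.1 p.2) :
    Measurable fun p : X × Config E => weight A (Φ p.1) p.2 := by
  have hprod : Measurable fun p : X × Config E => ∏ i, Φ p.1 (p.2.2 i) :=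
    measurable_prod_sigma fun N => by
      change Measurable fun p : X × (Fin N → E) => ∏ i, Φ p.1 (p.2 i)
      refine Finset.measurable_fun_prod _ fun i _ => ?_
      exact hΦ.comp (measurable_fst.prodMk ((measurable_pi_apply i).comp measurable_snd))
  exact hprod.indicator (measurable_snd (measurableSet_admissible hA))

lemma measurable_weight (hA : MeasurableSet {p : E × E | A p.1 p.2}) (hφ : Measurable φ) :
    Measurable (weight A φ) :=
  (measurable_weight_uncurry (Φ := fun _ : Unit => φ) hA (hφ.comp measurable_snd)).comp
    (measurable_prodMk_left (x := ()))

lemma measurable_weightDeriv (hA : MeasurableSet {p : E × E | A p.1 p.2}) (hφ : Measurable φ)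
    (hψ : Measurable ψ) : Measurable (weightDeriv A φ ψ) := by
  have hsum : Measurable fun p : Unit × Config E =>
      ∑ i, (∏ j ∈ Finset.univ.erase i, φ (p.2.2 j)) * ψ (p.2.2 i) :=
    measurable_prod_sigma fun N => by
      change Measurable fun p : Unit × (Fin N → E) =>
        ∑ i, (∏ j ∈ Finset.univ.erase i, φ (p.2 j)) * ψ (p.2 i)
      refine Finset.measurable_fun_sum _ fun i _ => .mul ?_ (by fun_prop)
      exact Finset.measurable_fun_prod _ fun j _ => by fun_prop
  exact (hsum.comp (measurable_prodMk_left (x := ()))).indicator (measurableSet_admissible hA)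

lemma measurable_insertParticle (hA : MeasurableSet {p : E × E | A p.1 p.2}) (hφ : Measurable φ)
    (hψ : Measurable ψ) :
    Measurable fun p : E × Config E => ψ p.1 * weight A (thinned A p.1 φ) p.2 :=
  (hψ.comp measurable_fst).mul <|
    measurable_weight_uncurry (Φ := fun x => thinned A x φ) hA (measurable_thinned_uncurry hA hφ)

section Integrability

variable [SigmaFinite P] (hA : MeasurableSet {p : E × E | A p.1 p.2}) (hρ : Integrable ρ P)

include hA hρ

lemma integrable_weight (hφm : Measurable φ) (hφ : ∀ z, |φ z| ≤ ρ z) :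
    Integrable (weight A φ) (lebesguePoisson P) :=
  (integrable_prod_lebesguePoisson hρ).mono' (measurable_weight hA hφm).aestronglyMeasurable
    (.of_forall (abs_weight_le hφ))

lemma integrable_weightDeriv (hφm : Measurable φ) (hψm : Measurable ψ) (hφ : ∀ z, |φ z| ≤ ρ z)
    (hψ : ∀ z, |ψ z| ≤ ρ z) : Integrable (weightDeriv A φ ψ) (lebesguePoisson P) :=
  (integrable_prod_lebesguePoisson (hρ.const_mul 2)).mono'
    (measurable_weightDeriv hA hφm hψm).aestronglyMeasurable
    (.of_forall (abs_weightDeriv_le hφ hψ))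

lemma integrable_insertParticle (hφm : Measurable φ) (hψm : Measurable ψ)
    (hφ : ∀ z, |φ z| ≤ ρ z) (hψ : ∀ z, |ψ z| ≤ ρ z) :
    Integrable (fun p : E × Config E => ψ p.1 * weight A (thinned A p.1 φ) p.2)
      (P.prod (lebesguePoisson P)) :=
  (hρ.mul_prod (integrable_prod_lebesguePoisson hρ)).mono'
    (measurable_insertParticle hA hφm hψm).aestronglyMeasurable
    (.of_forall fun p => abs_insertParticle_le hφ hψ p.1 p.2)

lemma integrable_insertParticle_slice (hφm : Measurable φ) (hψm : Measurable ψ)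
    (hφ : ∀ z, |φ z| ≤ ρ z) (hψ : ∀ z, |ψ z| ≤ ρ z) (N : ℕ) :
    Integrable (fun p : E × (Fin N → E) => ψ p.1 * weight A (thinned A p.1 φ) ⟨N, p.2⟩)
      (P.prod (Measure.pi fun _ : Fin N => P)) :=
  (hρ.mul_prod (Integrable.fin_nat_prod fun _ => hρ)).mono'
    ((measurable_insertParticle hA hφm hψm).comp
      (measurable_id.prodMap (measurableEmbedding_sigmaMk N).measurable)).aestronglyMeasurable
    (.of_forall fun p => abs_insertParticle_le hφ hψ p.1 ⟨N, p.2⟩)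

lemma integral_weightDeriv_succ (hsymm : ∀ x y, A x y → A y x) (hφm : Measurable φ)
    (hψm : Measurable ψ) (hφ : ∀ z, |φ z| ≤ ρ z) (hψ : ∀ z, |ψ z| ≤ ρ z) (N : ℕ) :
    ∫ Z, weightDeriv A φ ψ ⟨N + 1, Z⟩ ∂Measure.pi (fun _ : Fin (N + 1) => P) =
      (N + 1) * ∫ Z, ∫ x, ψ x * weight A (thinned A x φ) ⟨N, Z⟩ ∂P
        ∂Measure.pi fun _ : Fin N => P := by
  set K : E × (Fin N → E) → ℝ := fun p => ψ p.1 * weight A (thinned A p.1 φ) ⟨N, p.2⟩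
  have hK : Integrable K (P.prod (Measure.pi fun _ : Fin N => P)) :=
    integrable_insertParticle_slice hA hρ hφm hψm hφ hψ N
  have hmp (i : Fin (N + 1)) := measurePreserving_piFinSuccAbove (fun _ : Fin (N + 1) => P) i
  have hterm (i : Fin (N + 1)) : ∫ Z, ψ (Z i) * weight A (thinned A (Z i) φ) ⟨N, i.removeNth Z⟩
      ∂Measure.pi (fun _ : Fin (N + 1) => P) = ∫ p, K p ∂P.prod (Measure.pi fun _ : Fin N => P) :=
    (hmp i).integral_comp' K
  simp only [weightDeriv_succ hsymm]
  rw [integral_finsetSum, Finset.sum_congr rfl fun i _ => hterm i]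
  · simp [integral_prod_symm K hK, K]
  · exact fun i _ => (hmp i).integrable_comp_of_integrable hK

/-- The Mecke formula: differentiating the partition function amounts to inserting a particle. -/
lemma integral_weightDeriv (hsymm : ∀ x y, A x y → A y x) (hφm : Measurable φ)
    (hψm : Measurable ψ) (hφ : ∀ z, |φ z| ≤ ρ z) (hψ : ∀ z, |ψ z| ≤ ρ z) :
    ∫ ω, weightDeriv A φ ψ ω ∂lebesguePoisson P =
      ∫ x, ψ x * partition P A (thinned A x φ) ∂P := by
  have hins := integrable_insertParticle hA hρ hφm hψm hφ hψ
  have hderiv := hasSum_integral_lebesguePoisson (integrable_weightDeriv hA hρ hφm hψm hφ hψ)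
  have hinsert := hasSum_integral_lebesguePoisson hins.integral_prod_right
  have shift : HasSum (fun N => (Nat.factorial N : ℝ)⁻¹ *
      ∫ Z, ∫ x, ψ x * weight A (thinned A x φ) ⟨N, Z⟩ ∂P ∂Measure.pi fun _ : Fin N => P)
      (∫ ω, weightDeriv A φ ψ ω ∂lebesguePoisson P) := by
    convert! (hasSum_nat_add_iff' 1).2 hderiv using 2 with N
    · rw [integral_weightDeriv_succ hA hρ hsymm hφm hψm hφ hψ, Nat.factorial_succ]
      push_cast
      field_simp
    · simp [weightDeriv_zero]
  calc ∫ ω, weightDeriv A φ ψ ω ∂lebesguePoisson P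
      = ∫ ω, ∫ x, ψ x * weight A (thinned A x φ) ω ∂P ∂lebesguePoisson P := shift.unique hinsert
    _ = ∫ x, ∫ ω, ψ x * weight A (thinned A x φ) ω ∂lebesguePoisson P ∂P :=
        (integral_integral_swap hins).symm
    _ = ∫ x, ψ x * partition P A (thinned A x φ) ∂P := by simp only [integral_const_mul, partition]

end Integrability

end Partition

noncomputable section Insertion

open Filter Topology

variable {E : Type*} [MeasurableSpace E] {P : Measure E} {A : E → E → Prop} {ρ : E → ℝ}

/-- An activity dominated by `ρ`. All estimates below are uniform over the activities dominated by
a fixed integrable `ρ`. -/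
structure IsActivity (ρ φ : E → ℝ) : Prop where
  measurable : Measurable φ
  nonneg : ∀ z, 0 ≤ φ z
  le : ∀ z, φ z ≤ ρ z

/-- The insertion ratio: `φ x * insertion P A φ x` is the particle density at `x` in the grand
canonical ensemble with activity `φ`. -/
def insertion (P : Measure E) (A : E → E → Prop) (φ : E → ℝ) (x : E) : ℝ :=
  partition P A (thinned A x φ) / partition P A φ

namespace IsActivity

variable {φ : E → ℝ}

lemma abs_le (hφ : IsActivity ρ φ) (z : E) : |φ z| ≤ ρ z :=
  (abs_of_nonneg (hφ.nonneg z)).trans_le (hφ.le z)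

lemma thinned_le (hφ : IsActivity ρ φ) (x z : E) : thinned A x φ z ≤ φ z :=
  Set.indicator_le_self' (fun _ _ => hφ.nonneg z) z

lemma thinned (hA : MeasurableSet {p : E × E | A p.1 p.2}) (hφ : IsActivity ρ φ) (x : E) :
    IsActivity ρ (thinned A x φ) where
  measurable := measurable_thinned hA hφ.measurable x
  nonneg := Set.indicator_nonneg fun z _ => hφ.nonneg z
  le z := (hφ.thinned_le x z).trans (hφ.le z)

end IsActivity

lemma measurable_insertion [SigmaFinite P] (hA : MeasurableSet {p : E × E | A p.1 p.2})
    {φ : E → ℝ} (hφ : Measurable φ) : Measurable (insertion P A φ) := by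
  have hw := measurable_weight_uncurry (Φ := fun x => thinned A x φ) hA
    (measurable_thinned_uncurry hA hφ)
  exact (hw.stronglyMeasurable.integral_prod_right.measurable).div_const _

variable [SigmaFinite P] (hA : MeasurableSet {p : E × E | A p.1 p.2})
  (hsymm : ∀ x y, A x y → A y x) (hρ : Integrable ρ P)

include hA hρ

lemma one_le_partition {φ : E → ℝ} (hφ : IsActivity ρ φ) : 1 ≤ partition P A φ := by
  have hsum := hasSum_integral_lebesguePoisson
    (integrable_weight hA hρ hφ.measurable hφ.abs_le)
  have hterm (N : ℕ) : 0 ≤ (Nat.factorial N : ℝ)⁻¹ *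
      ∫ Z, weight A φ ⟨N, Z⟩ ∂Measure.pi fun _ : Fin N => P :=
    mul_nonneg (by positivity) (integral_nonneg fun Z => weight_nonneg hφ.nonneg _)
  simpa [weight_zero, Measure.real, partition] using le_hasSum hsum 0 fun N _ => hterm N

lemma partition_pos {φ : E → ℝ} (hφ : IsActivity ρ φ) : 0 < partition P A φ :=
  one_pos.trans_le (one_le_partition hA hρ hφ)

lemma partition_mono {φ ψ : E → ℝ} (hφ : IsActivity ρ φ) (hψ : IsActivity ρ ψ)
    (h : ∀ z, φ z ≤ ψ z) : partition P A φ ≤ partition P A ψ :=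
  integral_mono (integrable_weight hA hρ hφ.measurable hφ.abs_le)
    (integrable_weight hA hρ hψ.measurable hψ.abs_le) (weight_mono hφ.nonneg h)

lemma insertion_pos {φ : E → ℝ} (hφ : IsActivity ρ φ) (x : E) : 0 < insertion P A φ x :=
  div_pos (partition_pos hA hρ (hφ.thinned hA x)) (partition_pos hA hρ hφ)

lemma insertion_le_one {φ : E → ℝ} (hφ : IsActivity ρ φ) (x : E) : insertion P A φ x ≤ 1 :=
  div_le_one_of_le₀ (partition_mono hA hρ (hφ.thinned hA x) hφ (hφ.thinned_le x))
    (partition_pos hA hρ hφ).le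

lemma integrable_mul_insertion {φ ψ : E → ℝ} (hφ : IsActivity ρ φ) (hψ : Integrable ψ P) :
    Integrable (fun x => ψ x * insertion P A φ x) P :=
  hψ.mul_bdd (measurable_insertion hA hφ.measurable).aestronglyMeasurable
    (.of_forall fun x => (abs_of_pos (insertion_pos hA hρ hφ x)).trans_le
      (insertion_le_one hA hρ hφ x))

include hsymm

lemma hasDerivAt_partition {φ φ' : ℝ → E → ℝ} {s : ℝ} (hm : ∀ t, Measurable (φ t))
    (hm' : Measurable (φ' s)) (hbound : ∀ᶠ t in 𝓝 s, ∀ z, |φ t z| ≤ ρ z ∧ |φ' t z| ≤ ρ z)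
    (hderiv : ∀ t z, HasDerivAt (fun t => φ t z) (φ' t z) t) :
    HasDerivAt (fun t => partition P A (φ t))
      (∫ x, φ' s x * partition P A (thinned A x (φ s)) ∂P) s := by
  have hs := hbound.self_of_nhds
  rw [← integral_weightDeriv hA hρ hsymm (hm s) hm' (fun z => (hs z).1) fun z => (hs z).2]
  have hdom : ∀ ω : Config E, ∀ t ∈ {t | ∀ z, |φ t z| ≤ ρ z ∧ |φ' t z| ≤ ρ z},
      ‖weightDeriv A (φ t) (φ' t) ω‖ ≤ ∏ i, 2 * ρ (ω.2 i) :=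
    fun ω t ht => abs_weightDeriv_le (fun z => (ht z).1) (fun z => (ht z).2) ω
  refine (hasDerivAt_integral_of_dominated_loc_of_deriv_le (F := fun t ω => weight A (φ t) ω)
    (F' := fun t ω => weightDeriv A (φ t) (φ' t) ω) hbound
    (.of_forall fun t => (measurable_weight hA (hm t)).aestronglyMeasurable)
    (integrable_weight hA hρ (hm s) fun z => (hs z).1)
    (measurable_weightDeriv hA (hm s) hm').aestronglyMeasurable ?_
    (integrable_prod_lebesguePoisson (hρ.const_mul 2))
    ?_).2
  · exact .of_forall hdom
  · exact .of_forall fun ω t _ => hasDerivAt_weight (hderiv t) ω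

lemma hasDerivAt_log_partition {φ φ' : ℝ → E → ℝ} {s : ℝ} (hm : ∀ t, Measurable (φ t))
    (hm' : Measurable (φ' s)) (hbound : ∀ᶠ t in 𝓝 s, ∀ z, |φ t z| ≤ ρ z ∧ |φ' t z| ≤ ρ z)
    (hderiv : ∀ t z, HasDerivAt (fun t => φ t z) (φ' t z) t) (hφ : ∀ z, 0 ≤ φ s z) :
    HasDerivAt (fun t => log (partition P A (φ t))) (∫ x, φ' s x * insertion P A (φ s) x ∂P) s := by
  have hact : IsActivity ρ (φ s) :=
    ⟨hm s, hφ, fun z => (le_abs_self _).trans (hbound.self_of_nhds z).1⟩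
  convert! (hasDerivAt_partition hA hsymm hρ hm hm' hbound hderiv).log
    (partition_pos hA hρ hact).ne' using 1
  simp only [insertion, mul_div_assoc', integral_div]

end Insertion

noncomputable section LogLipschitz

open Filter Topology

/-- Multiplicative closeness: `f` and `g` agree up to a factor `exp a`. Phrased without logarithms
so that activities may vanish. -/
def LogClose {E : Type*} (a : ℝ) (f g : E → ℝ) : Prop :=
  ∀ z, f z ≤ exp a * g z ∧ g z ≤ exp a * f z

lemma abs_sub_le_of_le_exp_mul {u v b M : ℝ} (hu : 0 ≤ u) (hv : 0 ≤ v) (hb : 0 ≤ b)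
    (huM : u ≤ M) (hvM : v ≤ M) (huv : u ≤ exp b * v) (hvu : v ≤ exp b * u) : |u - v| ≤ M * b := by
  have sub_le {s t : ℝ} (hs : 0 ≤ s) (hsM : s ≤ M) (hst : s ≤ exp b * t) : s - t ≤ M * b := by
    have ht : exp (-b) * s ≤ t := by
      rw [exp_neg, inv_mul_le_iff₀ (exp_pos b)]
      exact hst
    have hs' : (1 - b) * s ≤ exp (-b) * s := by
      gcongr
      linarith [add_one_le_exp (-b)]
    linarith [mul_le_mul_of_nonneg_right hsM hb]
  exact abs_sub_le_iff.2 ⟨sub_le hu huM huv, sub_le hv hvM hvu⟩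

namespace LogClose

variable {E : Type*} {a c : ℝ} {f g u v : E → ℝ}

lemma mul (h : LogClose a f g) (h' : LogClose c u v) (hf : ∀ z, 0 ≤ f z) (hg : ∀ z, 0 ≤ g z)
    (hu : ∀ z, 0 ≤ u z) (hv : ∀ z, 0 ≤ v z) :
    LogClose (a + c) (fun z => f z * u z) fun z => g z * v z := fun z => by
  rw [exp_add, mul_mul_mul_comm, mul_mul_mul_comm _ _ (f z)]
  exact ⟨mul_le_mul (h z).1 (h' z).1 (hu z) (mul_nonneg (exp_pos a).le (hg z)),
    mul_le_mul (h z).2 (h' z).2 (hv z) (mul_nonneg (exp_pos a).le (hf z))⟩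

lemma mul_right (h : LogClose a f g) (hu : ∀ z, 0 ≤ u z) :
    LogClose a (fun z => f z * u z) fun z => g z * u z := fun z => by
  rw [← mul_assoc, ← mul_assoc]
  exact ⟨mul_le_mul_of_nonneg_right (h z).1 (hu z), mul_le_mul_of_nonneg_right (h z).2 (hu z)⟩

lemma abs_sub_le (h : LogClose a f g) (ha : 0 ≤ a) (hf : ∀ z, 0 ≤ f z) (hg : ∀ z, 0 ≤ g z) {z : E}
    {M : ℝ} (hfM : f z ≤ M) (hgM : g z ≤ M) : |f z - g z| ≤ M * a :=
  abs_sub_le_of_le_exp_mul (hf z) (hg z) ha hfM hgM (h z).1 (h z).2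

lemma of_abs_log_sub_le (hf : ∀ z, 0 < f z) (hg : ∀ z, 0 < g z)
    (h : ∀ z, |log (f z) - log (g z)| ≤ a) : LogClose a f g := fun z => by
  obtain ⟨hfg, hgf⟩ := abs_sub_le_iff.1 (h z)
  rw [← exp_log (hf z), ← exp_log (hg z), ← exp_add, ← exp_add, exp_le_exp, exp_le_exp]
  constructor <;> linarith

end LogClose

variable {E : Type*} {A : E → E → Prop} {φ ρ : E → ℝ} {a c q : ℝ}

/-- The region in which a particle at `x` forbids the presence of other particles. -/
def excluded (A : E → E → Prop) (x : E) : Set E := {y | ¬ A x y}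

/-- The activity `φ` with its part in the region excluded by `x` faded by the factor `1 - t`. It
interpolates linearly between `φ` at `t = 0` and `thinned A x φ` at `t = 1`. -/
def faded (A : E → E → Prop) (x : E) (φ : E → ℝ) (t : ℝ) (z : E) : ℝ :=
  φ z * (1 - t * (excluded A x).indicator 1 z)

lemma indicator_one_mem_Icc (S : Set E) (z : E) :
    S.indicator (1 : E → ℝ) z ∈ Set.Icc (0 : ℝ) 1 := by
  by_cases hz : z ∈ S <;> simp [hz]

lemma faded_factor_mem_Icc (x z : E) {t : ℝ} (ht : t ∈ Set.Icc (0 : ℝ) 1) :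
    1 - t * (excluded A x).indicator 1 z ∈ Set.Icc (0 : ℝ) 1 := by
  obtain ⟨h₀, h₁⟩ := indicator_one_mem_Icc (excluded A x) z
  have := mul_nonneg ht.1 h₀
  have := mul_le_one₀ ht.2 h₀ h₁
  constructor <;> linarith

lemma faded_zero (x : E) : faded A x φ 0 = φ := by
  ext z
  simp [faded]

lemma faded_one (x : E) : faded A x φ 1 = thinned A x φ := by
  ext z
  by_cases hz : A x z <;> simp [faded, thinned, excluded, hz]

variable [MeasurableSpace E] {P : Measure E}

lemma measurableSet_excluded (hA : MeasurableSet {p : E × E | A p.1 p.2}) (x : E) :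
    MeasurableSet (excluded A x) :=
  (measurable_prodMk_left hA).compl

lemma IsActivity.faded (hA : MeasurableSet {p : E × E | A p.1 p.2}) (hφ : IsActivity ρ φ) (x : E)
    {t : ℝ} (ht : t ∈ Set.Icc (0 : ℝ) 1) : IsActivity ρ (faded A x φ t) where
  measurable := hφ.measurable.mul <| measurable_const.sub <|
    measurable_const.mul (measurable_one.indicator (measurableSet_excluded hA x))
  nonneg z := mul_nonneg (hφ.nonneg z) (faded_factor_mem_Icc x z ht).1
  le z := (mul_le_of_le_one_right (hφ.nonneg z) (faded_factor_mem_Icc x z ht).2).trans (hφ.le z)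

/-- Closeness of activities propagates to insertion ratios: any two activities dominated by `ρ` that
agree up to a factor `exp a` have insertion ratios that agree up to a factor `exp c`. -/
def InsertionLogClose (P : Measure E) (A : E → E → Prop) (ρ : E → ℝ) (a c : ℝ) : Prop :=
  ∀ ⦃φ φ' : E → ℝ⦄, IsActivity ρ φ → IsActivity ρ φ' → LogClose a φ φ' →
    LogClose c (insertion P A φ) (insertion P A φ')

variable [SigmaFinite P] (hA : MeasurableSet {p : E × E | A p.1 p.2})
  (hsymm : ∀ x y, A x y → A y x) (hρ : Integrable ρ P)

include hA hρ

lemma partition_le (hφ : IsActivity ρ φ) :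
    partition P A φ ≤ ∫ ω : Config E, ∏ i, ρ (ω.2 i) ∂lebesguePoisson P :=
  integral_mono (integrable_weight hA hρ hφ.measurable hφ.abs_le)
    (integrable_prod_lebesguePoisson hρ) fun ω => (le_abs_self _).trans (abs_weight_le hφ.abs_le ω)

lemma insertionLogClose_apriori :
    InsertionLogClose P A ρ a (log (∫ ω : Config E, ∏ i, ρ (ω.2 i) ∂lebesguePoisson P)) := by
  intro φ φ' hφ hφ' _
  set K := ∫ ω : Config E, ∏ i, ρ (ω.2 i) ∂lebesguePoisson P
  have hK : 0 < K := (partition_pos hA hρ hφ).trans_le (partition_le hA hρ hφ)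
  have one_le {ψ : E → ℝ} (hψ : IsActivity ρ ψ) (x : E) : 1 ≤ K * insertion P A ψ x := by
    rw [insertion, mul_div_assoc', one_le_div (partition_pos hA hρ hψ)]
    nlinarith [partition_le hA hρ hψ, one_le_partition hA hρ (hψ.thinned hA x)]
  intro x
  rw [exp_log hK]
  exact ⟨(insertion_le_one hA hρ hφ x).trans (one_le hφ' x),
    (insertion_le_one hA hρ hφ' x).trans (one_le hφ x)⟩

include hsymm

lemma hasDerivAt_log_partition_faded (hφ : IsActivity ρ φ) (x : E) {s : ℝ}
    (hs : s ∈ Set.Icc (0 : ℝ) 1) :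
    HasDerivAt (fun t => log (partition P A (faded A x φ t)))
      (-∫ z in excluded A x, φ z * insertion P A (faded A x φ s) z ∂P) s := by
  have hS := measurableSet_excluded hA x
  have hbound : ∀ᶠ t in 𝓝 s, ∀ z, |faded A x φ t z| ≤ 3 * ρ z ∧
      |φ z * -(excluded A x).indicator 1 z| ≤ 3 * ρ z := by
    filter_upwards [Ioo_mem_nhds (show (-1 : ℝ) < s by linarith [hs.1])
      (show s < 2 by linarith [hs.2])] with t ht z
    obtain ⟨h₀, h₁⟩ := indicator_one_mem_Icc (excluded A x) z
    have three_bound {r : ℝ} (hr : |r| ≤ 3) : |φ z * r| ≤ 3 * ρ z := by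
      rw [abs_mul, mul_comm 3]
      exact mul_le_mul (hφ.abs_le z) hr (abs_nonneg r) ((hφ.nonneg z).trans (hφ.le z))
    refine ⟨three_bound (abs_le.2 ?_), three_bound (abs_le.2 ?_)⟩
    · constructor <;> nlinarith [ht.1, ht.2]
    · constructor <;> linarith
  have hderiv (t : ℝ) (z : E) : HasDerivAt (fun t => faded A x φ t z)
      (φ z * -(excluded A x).indicator 1 z) t := by
    unfold faded
    simpa using (((hasDerivAt_id t).mul_const _).const_sub 1).const_mul (φ z)
  have hm (t : ℝ) : Measurable (faded A x φ t) := hφ.measurable.mul <| measurable_const.sub <|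
    measurable_const.mul (measurable_one.indicator hS)
  convert! hasDerivAt_log_partition hA hsymm (hρ.const_mul 3) hm
    (hφ.measurable.mul (measurable_one.indicator hS).neg) hbound hderiv
    (hφ.faded hA x hs).nonneg using 1
  rw [← integral_indicator hS, ← integral_neg]
  congr with z
  by_cases hz : z ∈ excluded A x <;> simp [hz]

lemma abs_log_insertion_sub_le {φ' : E → ℝ} (hφ : IsActivity ρ φ) (hφ' : IsActivity ρ φ') (x : E)
    {C : ℝ} (h : ∀ s ∈ Set.Icc (0 : ℝ) 1, |(∫ z in excluded A x,
        φ z * insertion P A (faded A x φ s) z ∂P) -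
      ∫ z in excluded A x, φ' z * insertion P A (faded A x φ' s) z ∂P| ≤ C) :
    |log (insertion P A φ x) - log (insertion P A φ' x)| ≤ C := by
  have log_insertion {ψ : E → ℝ} (hψ : IsActivity ρ ψ) : log (insertion P A ψ x) =
      log (partition P A (faded A x ψ 1)) - log (partition P A (faded A x ψ 0)) := by
    rw [faded_one, faded_zero, insertion, log_div (partition_pos hA hρ (hψ.thinned hA x)).ne'
      (partition_pos hA hρ hψ).ne']
  have hD (s : ℝ) (hs : s ∈ Set.Icc (0 : ℝ) 1) :=
    (hasDerivAt_log_partition_faded hA hsymm hρ hφ x hs).sub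
      (hasDerivAt_log_partition_faded hA hsymm hρ hφ' x hs)
  have hmean := norm_image_sub_le_of_norm_deriv_le_segment_01'
    (fun s hs => (hD s hs).hasDerivWithinAt) (C := C) fun s hs => by
      rw [neg_sub_neg, norm_sub_rev]
      exact h s (Set.Ico_subset_Icc_self hs)
  rw [log_insertion hφ, log_insertion hφ', sub_sub_sub_comm]
  exact hmean

lemma InsertionLogClose.improve (ha : 0 ≤ a) (hc : 0 ≤ c)
    (hq : ∀ x, ∫ z in excluded A x, ρ z ∂P ≤ q) (h : InsertionLogClose P A ρ a c) :
    InsertionLogClose P A ρ a (q * (a + c)) := by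
  intro φ φ' hφ hφ' hclose
  refine LogClose.of_abs_log_sub_le (insertion_pos hA hρ hφ) (insertion_pos hA hρ hφ') fun x => ?_
  refine abs_log_insertion_sub_le hA hsymm hρ hφ hφ' x fun s hs => ?_
  set r := insertion P A (faded A x φ s)
  set r' := insertion P A (faded A x φ' s)
  have hf := hφ.faded hA x hs
  have hf' := hφ'.faded hA x hs
  have hr : ∀ z, 0 ≤ r z := fun z => (insertion_pos hA hρ hf z).le
  have hr' : ∀ z, 0 ≤ r' z := fun z => (insertion_pos hA hρ hf' z).le
  have hrr' : LogClose c r r' :=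
    h hf hf' (hclose.mul_right fun z => (faded_factor_mem_Icc x z hs).1)
  have hprod := hclose.mul hrr' hφ.nonneg hφ'.nonneg hr hr'
  have density_le {ψ ψ' : E → ℝ} (hψ : IsActivity ρ ψ) (hψ' : IsActivity ρ ψ') (z : E) :
      ψ z * insertion P A ψ' z ≤ ρ z :=
    (mul_le_of_le_one_right (hψ.nonneg z) (insertion_le_one hA hρ hψ' z)).trans (hψ.le z)
  have pointwise (z : E) : |φ z * r z - φ' z * r' z| ≤ ρ z * (a + c) :=
    hprod.abs_sub_le (add_nonneg ha hc) (fun z => mul_nonneg (hφ.nonneg z) (hr z))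
      (fun z => mul_nonneg (hφ'.nonneg z) (hr' z)) (density_le hφ hf z) (density_le hφ' hf' z)
  have hint {ψ : E → ℝ} (hψ : IsActivity ρ ψ) : Integrable ψ P :=
    hρ.mono' hψ.measurable.aestronglyMeasurable (.of_forall hψ.abs_le)
  rw [← integral_sub (integrable_mul_insertion hA hρ hf (hint hφ)).integrableOn
    (integrable_mul_insertion hA hρ hf' (hint hφ')).integrableOn]
  calc |∫ z in excluded A x, (φ z * r z - φ' z * r' z) ∂P|
      ≤ ∫ z in excluded A x, ρ z * (a + c) ∂P :=
        norm_integral_le_of_norm_le (f := fun z => φ z * r z - φ' z * r' z)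
          (hρ.mul_const _).integrableOn (.of_forall pointwise)
    _ = (∫ z in excluded A x, ρ z ∂P) * (a + c) := integral_mul_const _ _
    _ ≤ q * (a + c) := by gcongr; exact hq x

/-- Iterating `improve` drives the a priori bound to the fixed point of `c ↦ q * (a + c)`. -/
lemma insertionLogClose (ha : 0 ≤ a) (hq₀ : 0 ≤ q) (hq₁ : q < 1)
    (hq : ∀ x, ∫ z in excluded A x, ρ z ∂P ≤ q) : InsertionLogClose P A ρ a (q / (1 - q) * a) := by
  intro φ φ' hφ hφ' hclose x
  set K := log (∫ ω : Config E, ∏ i, ρ (ω.2 i) ∂lebesguePoisson P)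
  have hK : 0 ≤ K :=
    log_nonneg ((one_le_partition hA hρ hφ).trans (partition_le hA hρ hφ))
  set b := q / (1 - q) * a with hb
  have hb₀ : 0 ≤ b := mul_nonneg (div_nonneg hq₀ (sub_pos.2 hq₁).le) ha
  have hfix : q * (a + b) = b := by
    have := (sub_pos.2 hq₁).ne'
    rw [hb]
    field_simp
    ring
  have iterate (n : ℕ) : InsertionLogClose P A ρ a (b + q ^ n * (K - b)) := by
    induction n with
    | zero => simpa using insertionLogClose_apriori hA hρ
    | succ n ih =>
      have hpow : q ^ n ≤ 1 := pow_le_one₀ hq₀ hq₁.le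
      have hc : 0 ≤ b + q ^ n * (K - b) := by
        nlinarith [mul_nonneg (pow_nonneg hq₀ n) hK, mul_le_mul_of_nonneg_right hpow hb₀]
      convert ih.improve hA hsymm hρ ha hc hq using 1
      linear_combination -hfix
  have hlim : Tendsto (fun n => exp (b + q ^ n * (K - b))) atTop (𝓝 (exp b)) := by
    simpa using ((tendsto_pow_atTop_nhds_zero_of_lt_one hq₀ hq₁).mul_const (K - b)).const_add b
      |>.rexp
  exact ⟨ge_of_tendsto' (hlim.mul_const _) fun n => (iterate n hφ hφ' hclose x).1,
    ge_of_tendsto' (hlim.mul_const _) fun n => (iterate n hφ hφ' hclose x).2⟩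

end LogLipschitz

noncomputable section Gibbs

open Filter Topology

variable {E : Type*}

/-- The activity `φ` tilted by the exponential of `s * g`. -/
def tilted (φ g : E → ℝ) (s : ℝ) (z : E) : ℝ :=
  φ z * exp (s * g z)

variable {A : E → E → Prop} {φ ρ g h : E → ℝ} {τ : ℝ}

lemma tilted_zero : tilted φ g 0 = φ := by
  ext z
  simp [tilted]

lemma weight_tilted_one :
    weight A (tilted φ g 1) = fun ω => weight A φ ω * exp (linearStatistic g ω) := by
  ext ω
  by_cases hω : ω ∈ admissible A <;>
    simp [weight, tilted, linearStatistic, hω, Finset.prod_mul_distrib, exp_sum]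

lemma abs_mul_le_of_mem_Icc (hg : ∀ z, |g z| ≤ τ) {s : ℝ} (hs : s ∈ Set.Icc (0 : ℝ) 1) (z : E) :
    |s * g z| ≤ τ := by
  rw [abs_mul, abs_of_nonneg hs.1]
  exact (mul_le_of_le_one_left (abs_nonneg _) hs.2).trans (hg z)

variable [MeasurableSpace E] {P : Measure E}

/-- The grand canonical Gibbs measure with pair exclusion `A` and activity `φ`. -/
def gibbs (P : Measure E) (A : E → E → Prop) (φ : E → ℝ) : Measure (Config E) :=
  (lebesguePoisson P).withDensity fun ω => ENNReal.ofReal (weight A φ ω / partition P A φ)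

lemma tilted_le (hφ : IsActivity ρ φ) {c : ℝ} {s : ℝ} {z : E} (hc : s * g z ≤ c) :
    tilted φ g s z ≤ exp c * ρ z := by
  rw [tilted, mul_comm]
  exact mul_le_mul (exp_le_exp.2 hc) (hφ.le z) (hφ.nonneg z) (exp_pos c).le

lemma IsActivity.tilted (hφ : IsActivity ρ φ) (hgm : Measurable g) (hg : ∀ z, |g z| ≤ τ) {s : ℝ}
    (hs : s ∈ Set.Icc (0 : ℝ) 1) : IsActivity (fun z => exp τ * ρ z) (tilted φ g s) where
  measurable := hφ.measurable.mul (hgm.const_mul s).exp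
  nonneg z := mul_nonneg (hφ.nonneg z) (exp_pos _).le
  le z := tilted_le hφ ((le_abs_self _).trans (abs_mul_le_of_mem_Icc hg hs z))

lemma logClose_tilted (hφ : IsActivity ρ φ) (hg : ∀ z, |g z| ≤ τ) {s : ℝ}
    (hs : s ∈ Set.Icc (0 : ℝ) 1) : LogClose τ (tilted φ g s) φ := fun z => by
  obtain ⟨hlow, hup⟩ := abs_le.1 (abs_mul_le_of_mem_Icc hg hs z)
  have hφz := hφ.nonneg z
  constructor
  · exact tilted_le ⟨hφ.measurable, hφ.nonneg, fun _ => le_rfl⟩ hup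
  · rw [tilted, mul_left_comm, ← exp_add]
    exact le_mul_of_one_le_right hφz (one_le_exp (by linarith))

variable [SigmaFinite P] (hA : MeasurableSet {p : E × E | A p.1 p.2}) (hρ : Integrable ρ P)
  (hφ : IsActivity ρ φ)

include hA hρ hφ

lemma integrable_gibbs_iff {F : Config E → ℝ} :
    Integrable F (gibbs P A φ) ↔
      Integrable (fun ω => weight A φ ω * F ω) (lebesguePoisson P) := by
  have hZ := partition_pos hA hρ hφ
  have hmeas := ((measurable_weight hA hφ.measurable).div_const (partition P A φ)).ennreal_ofReal
  rw [gibbs, integrable_withDensity_iff_integrable_smul' hmeas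
    (.of_forall fun _ => ENNReal.ofReal_lt_top), ← integrable_const_mul_iff
    (isUnit_iff_ne_zero.2 (inv_ne_zero hZ.ne')) fun ω => weight A φ ω * F ω]
  refine integrable_congr (.of_forall fun ω => ?_)
  simp only [smul_eq_mul, ENNReal.toReal_ofReal (div_nonneg (weight_nonneg hφ.nonneg ω) hZ.le)]
  ring

lemma integral_gibbs (F : Config E → ℝ) :
    ∫ ω, F ω ∂gibbs P A φ =
      (∫ ω, weight A φ ω * F ω ∂lebesguePoisson P) / partition P A φ := by
  have hZ := partition_pos hA hρ hφ
  have hmeas := ((measurable_weight hA hφ.measurable).div_const (partition P A φ)).ennreal_ofReal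
  rw [gibbs, integral_withDensity_eq_integral_toReal_smul hmeas
    (.of_forall fun _ => ENNReal.ofReal_lt_top), ← integral_div]
  congr with ω
  rw [ENNReal.toReal_ofReal (div_nonneg (weight_nonneg hφ.nonneg ω) hZ.le), smul_eq_mul]
  ring

lemma integrable_exp_linearStatistic (hgm : Measurable g) (hg : ∀ z, |g z| ≤ τ) :
    Integrable (fun ω => exp (linearStatistic g ω)) (gibbs P A φ) := by
  have htilt := hφ.tilted hgm hg (s := 1) ⟨zero_le_one, le_rfl⟩
  rw [integrable_gibbs_iff hA hρ hφ]
  simpa only [weight_tilted_one] using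
    integrable_weight hA (hρ.const_mul (exp τ)) htilt.measurable htilt.abs_le

lemma integral_exp_linearStatistic (g : E → ℝ) :
    ∫ ω, exp (linearStatistic g ω) ∂gibbs P A φ =
      partition P A (tilted φ g 1) / partition P A φ := by
  rw [integral_gibbs hA hρ hφ, ← weight_tilted_one]
  rfl

variable (hsymm : ∀ x y, A x y → A y x)

include hsymm

lemma integral_linearStatistic (hh : Measurable h) (hφh : Integrable (fun x => φ x * h x) P) :
    ∫ ω, linearStatistic h ω ∂gibbs P A φ = ∫ x, φ x * h x * insertion P A φ x ∂P := by
  have mecke := integral_weightDeriv hA (hρ.add hφh.abs) hsymm hφ.measurable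
    (hφ.measurable.mul hh) (fun z => (hφ.abs_le z).trans (le_add_of_nonneg_right (abs_nonneg _)))
    fun z => le_add_of_nonneg_left ((hφ.nonneg z).trans (hφ.le z))
  simp only [Pi.mul_def, weightDeriv_mul] at mecke
  rw [integral_gibbs hA hρ hφ]
  simp only [mecke, insertion, mul_div_assoc', integral_div]

lemma hasDerivAt_log_partition_tilted (hτ : 0 ≤ τ) (hgm : Measurable g) (hg : ∀ z, |g z| ≤ τ)
    {s : ℝ} (hs : s ∈ Set.Icc (0 : ℝ) 1) :
    HasDerivAt (fun t => log (partition P A (tilted φ g t)))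
      (∫ x, tilted φ g s x * g x * insertion P A (tilted φ g s) x ∂P) s := by
  have hm (t : ℝ) : Measurable (tilted φ g t) := hφ.measurable.mul (hgm.const_mul t).exp
  have hderiv (t : ℝ) (z : E) :
      HasDerivAt (fun t => tilted φ g t z) (tilted φ g t z * g z) t := by
    simpa [tilted, mul_assoc] using
      (((hasDerivAt_id t).mul_const (g z)).exp).const_mul (φ z)
  have hbound : ∀ᶠ t in 𝓝 s, ∀ z, |tilted φ g t z| ≤ (1 + τ) * (exp (2 * τ) * ρ z) ∧
      |tilted φ g t z * g z| ≤ (1 + τ) * (exp (2 * τ) * ρ z) := by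
    filter_upwards [Ioo_mem_nhds (show (-2 : ℝ) < s by linarith [hs.1])
      (show s < 2 by linarith [hs.2])] with t ht z
    have hexponent : t * g z ≤ 2 * τ := by
      refine (le_abs_self _).trans ?_
      rw [abs_mul]
      exact mul_le_mul (abs_le.2 ⟨ht.1.le, ht.2.le⟩) (hg z) (abs_nonneg _) two_pos.le
    have htilt : |tilted φ g t z| ≤ exp (2 * τ) * ρ z := by
      rw [tilted, abs_of_nonneg (mul_nonneg (hφ.nonneg z) (exp_pos _).le)]
      exact tilted_le hφ hexponent
    have hdom := (abs_nonneg _).trans htilt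
    constructor
    · linarith [mul_nonneg hτ hdom]
    · rw [abs_mul]
      linarith [mul_le_mul htilt (hg z) (abs_nonneg _) hdom]
  exact hasDerivAt_log_partition hA hsymm ((hρ.const_mul _).const_mul _) hm ((hm s).mul hgm)
    hbound hderiv (hφ.tilted hgm hg hs).nonneg

lemma abs_integral_tilted_sub_le (hτ : 0 ≤ τ) (hgm : Measurable g) (hg : ∀ z, |g z| ≤ τ)
    (hsmall : ∀ x, ∫ z in excluded A x, exp τ * ρ z ∂P ≤ 1 / 2) {s : ℝ}
    (hs : s ∈ Set.Icc (0 : ℝ) 1) :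
    |(∫ x, tilted φ g s x * g x * insertion P A (tilted φ g s) x ∂P) -
      ∫ x, φ x * g x * insertion P A φ x ∂P| ≤ 2 * τ ^ 2 * exp τ * ∫ x, ρ x ∂P := by
  have hρ' := hρ.const_mul (exp τ)
  have htilt := hφ.tilted hgm hg hs
  have hφ' : IsActivity (fun z => exp τ * ρ z) φ := by
    simpa [tilted_zero] using hφ.tilted hgm hg (s := 0) ⟨le_rfl, zero_le_one⟩
  have hclose := logClose_tilted hφ hg hs
  have hins := insertionLogClose hA hsymm hρ' hτ one_half_pos.le one_half_lt_one hsmall htilt hφ'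
    hclose
  have hnonneg {ψ : E → ℝ} (hψ : IsActivity (fun z => exp τ * ρ z) ψ) (z : E) :
      0 ≤ insertion P A ψ z := (insertion_pos hA hρ' hψ z).le
  have hdens := hclose.mul hins htilt.nonneg hφ.nonneg (hnonneg htilt) (hnonneg hφ')
  have density_le {ψ : E → ℝ} (hψ : IsActivity (fun z => exp τ * ρ z) ψ) (z : E) :
      ψ z * insertion P A ψ z ≤ exp τ * ρ z :=
    (mul_le_of_le_one_right (hψ.nonneg z) (insertion_le_one hA hρ' hψ z)).trans (hψ.le z)
  have pointwise (z : E) : |tilted φ g s z * g z * insertion P A (tilted φ g s) z -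
      φ z * g z * insertion P A φ z| ≤ 2 * τ ^ 2 * exp τ * ρ z := by
    have hdiff := hdens.abs_sub_le (by linarith) (fun z => mul_nonneg (htilt.nonneg z)
      (hnonneg htilt z)) (fun z => mul_nonneg (hφ.nonneg z) (hnonneg hφ' z))
      (density_le htilt z) (density_le hφ' z)
    rw [mul_right_comm, mul_right_comm (φ z), ← sub_mul, abs_mul]
    refine (mul_le_mul hdiff (hg z) (abs_nonneg _) ((abs_nonneg _).trans hdiff)).trans_eq ?_
    ring
  have hint {ψ : E → ℝ} (hψ : IsActivity (fun z => exp τ * ρ z) ψ) :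
      Integrable (fun x => ψ x * g x * insertion P A ψ x) P :=
    integrable_mul_insertion hA hρ' hψ <| (hρ'.mono' hψ.measurable.aestronglyMeasurable
      (.of_forall hψ.abs_le)).mul_bdd hgm.aestronglyMeasurable (.of_forall hg)
  rw [← integral_sub (hint htilt) (hint hφ'), ← integral_const_mul]
  exact norm_integral_le_of_norm_le (f := fun x => tilted φ g s x * g x *
    insertion P A (tilted φ g s) x - φ x * g x * insertion P A φ x) (hρ.const_mul _)
    (.of_forall pointwise)

lemma integral_exp_centred_linearStatistic_le (hτ : 0 ≤ τ) (hgm : Measurable g)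
    (hg : ∀ z, |g z| ≤ τ) (hsmall : ∀ x, ∫ z in excluded A x, exp τ * ρ z ∂P ≤ 1 / 2) :
    ∫ ω, exp (linearStatistic g ω - ∫ ω', linearStatistic g ω' ∂gibbs P A φ) ∂gibbs P A φ ≤
      exp (2 * τ ^ 2 * exp τ * ∫ x, ρ x ∂P) := by
  set m := ∫ ω', linearStatistic g ω' ∂gibbs P A φ with hm
  rw [integral_linearStatistic hA hρ hφ hsymm hgm ((hρ.mono' hφ.measurable.aestronglyMeasurable
    (.of_forall hφ.abs_le)).mul_bdd hgm.aestronglyMeasurable (.of_forall hg))] at hm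
  have hD (s : ℝ) (hs : s ∈ Set.Icc (0 : ℝ) 1) :=
    (hasDerivAt_log_partition_tilted hA hρ hφ hsymm hτ hgm hg hs).sub
      ((hasDerivAt_id s).mul_const m)
  have hmean := norm_image_sub_le_of_norm_deriv_le_segment_01'
    (fun s hs => (hD s hs).hasDerivWithinAt) (C := 2 * τ ^ 2 * exp τ * ∫ x, ρ x ∂P) fun s hs => by
      rw [one_mul, hm]
      exact abs_integral_tilted_sub_le hA hρ hφ hsymm hτ hgm hg hsmall
        (Set.Ico_subset_Icc_self hs)
  have hlog : log (partition P A (tilted φ g 1)) - log (partition P A φ) - m ≤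
      2 * τ ^ 2 * exp τ * ∫ x, ρ x ∂P := by
    have := (le_abs_self _).trans hmean
    simp only [Pi.sub_apply, tilted_zero, id] at this
    linarith
  have hZ := partition_pos hA hρ hφ
  have hZ₁ := partition_pos hA (hρ.const_mul (exp τ))
    (hφ.tilted hgm hg (s := 1) ⟨zero_le_one, le_rfl⟩)
  calc ∫ ω, exp (linearStatistic g ω - m) ∂gibbs P A φ
      = partition P A (tilted φ g 1) / partition P A φ * exp (-m) := by
        simp only [sub_eq_add_neg, exp_add]
        rw [integral_mul_const, integral_exp_linearStatistic hA hρ hφ]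
    _ = exp (log (partition P A (tilted φ g 1)) - log (partition P A φ) - m) := by
        rw [sub_eq_add_neg _ m, exp_add, exp_sub, exp_log hZ₁, exp_log hZ]
    _ ≤ _ := exp_le_exp.2 hlog

end Gibbs

noncomputable section Moments

lemma abs_pow_le_factorial_mul (x : ℝ) (p : ℕ) : |x ^ p| ≤ p.factorial * (exp x + exp (-x)) :=
  calc |x ^ p| = |x| ^ p := abs_pow x p
    _ ≤ p.factorial * exp |x| := by
        rw [← div_le_iff₀' (by positivity)]
        exact pow_div_factorial_le_exp _ (abs_nonneg x) p
    _ ≤ p.factorial * (exp x + exp (-x)) := by gcongr; exact exp_abs_le x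

lemma abs_integral_pow_le {Ω : Type*} [MeasurableSpace Ω] {μ : Measure Ω} {X : Ω → ℝ}
    (hX : Integrable (fun ω => exp (X ω)) μ) (hX' : Integrable (fun ω => exp (-X ω)) μ) (p : ℕ) :
    |∫ ω, X ω ^ p ∂μ| ≤ p.factorial * (∫ ω, exp (X ω) ∂μ + ∫ ω, exp (-X ω) ∂μ) := by
  rw [← integral_add hX hX', ← integral_const_mul]
  exact norm_integral_le_of_norm_le (f := fun ω => X ω ^ p) ((hX.add hX').const_mul _)
    (.of_forall fun ω => abs_pow_le_factorial_mul (X ω) p)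

lemma linearStatistic_neg {E : Type*} (g : E → ℝ) (ω : Config E) :
    linearStatistic (fun z => -g z) ω = -linearStatistic g ω :=
  Finset.sum_neg_distrib _

lemma linearStatistic_const_mul {E : Type*} (c : ℝ) (g : E → ℝ) (ω : Config E) :
    linearStatistic (fun z => c * g z) ω = c * linearStatistic g ω :=
  (Finset.mul_sum _ _ _).symm

variable {E : Type*} [MeasurableSpace E] {P : Measure E} [SigmaFinite P] {A : E → E → Prop}
  {φ ρ g : E → ℝ} {τ : ℝ} (hA : MeasurableSet {p : E × E | A p.1 p.2}) (hρ : Integrable ρ P)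
  (hφ : IsActivity ρ φ) (hgm : Measurable g) (hg : ∀ z, |g z| ≤ τ)

include hA hρ hφ hgm hg

lemma integrable_exp_linearStatistic_sub (m : ℝ) :
    Integrable (fun ω => exp (linearStatistic g ω - m)) (gibbs P A φ) := by
  simp only [exp_sub]
  exact (integrable_exp_linearStatistic hA hρ hφ hgm hg).div_const _

lemma integrable_exp_neg_linearStatistic_sub (m : ℝ) :
    Integrable (fun ω => exp (-(linearStatistic g ω - m))) (gibbs P A φ) := by
  have := integrable_exp_linearStatistic_sub hA hρ hφ hgm.neg
    (fun z => (abs_neg (g z)).trans_le (hg z)) (-m)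
  simpa only [Pi.neg_def, linearStatistic_neg, neg_sub, sub_neg_eq_add, neg_add_eq_sub] using this

lemma integrable_linearStatistic_sub_pow (m : ℝ) (p : ℕ) :
    Integrable (fun ω => (linearStatistic g ω - m) ^ p) (gibbs P A φ) :=
  ProbabilityTheory.integrable_pow_of_integrable_exp_mul one_ne_zero
    (by simpa only [one_mul] using integrable_exp_linearStatistic_sub hA hρ hφ hgm hg m)
    (by simpa only [neg_one_mul] using integrable_exp_neg_linearStatistic_sub hA hρ hφ hgm hg m) p

lemma integrable_linearStatistic : Integrable (linearStatistic g) (gibbs P A φ) := by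
  simpa using integrable_linearStatistic_sub_pow hA hρ hφ hgm hg 0 1

/-- The bound sees the volume only through `τ ^ 2 * ∫ ρ`, the variance scale of the statistic, which
is of order one for the fluctuation field. -/
lemma abs_integral_centred_linearStatistic_pow_le (hsymm : ∀ x y, A x y → A y x) (hτ : 0 ≤ τ)
    (hsmall : ∀ x, ∫ z in excluded A x, exp τ * ρ z ∂P ≤ 1 / 2) (p : ℕ) :
    |∫ ω, (linearStatistic g ω - ∫ ω', linearStatistic g ω' ∂gibbs P A φ) ^ p ∂gibbs P A φ| ≤
      2 * p.factorial * exp (2 * τ ^ 2 * exp τ * ∫ x, ρ x ∂P) := by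
  set m := ∫ ω', linearStatistic g ω' ∂gibbs P A φ with hm
  have upper := integral_exp_centred_linearStatistic_le hA hρ hφ hsymm hτ hgm hg hsmall
  have lower := integral_exp_centred_linearStatistic_le hA hρ hφ hsymm hτ hgm.neg
    (fun z => (abs_neg (g z)).trans_le (hg z)) hsmall
  simp only [Pi.neg_def, linearStatistic_neg, integral_neg, ← hm, sub_neg_eq_add, neg_add_eq_sub,
    ← neg_sub _ m] at lower upper
  calc |∫ ω, (linearStatistic g ω - m) ^ p ∂gibbs P A φ|
      ≤ p.factorial * (∫ ω, exp (linearStatistic g ω - m) ∂gibbs P A φ +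
          ∫ ω, exp (-(linearStatistic g ω - m)) ∂gibbs P A φ) :=
        abs_integral_pow_le (integrable_exp_linearStatistic_sub hA hρ hφ hgm hg m)
          (integrable_exp_neg_linearStatistic_sub hA hρ hφ hgm hg m) p
    _ ≤ p.factorial * (exp (2 * τ ^ 2 * exp τ * ∫ x, ρ x ∂P) +
          exp (2 * τ ^ 2 * exp τ * ∫ x, ρ x ∂P)) := by gcongr
    _ = 2 * p.factorial * exp (2 * τ ^ 2 * exp τ * ∫ x, ρ x ∂P) := by ring

end Moments

noncomputable section HardSpheres

variable {d : ℕ} {ε : ℝ}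

/-- The hard-sphere relation on phase space: positions at distance greater than `ε`. -/
def Separated (ε : ℝ) (z w : Phase d) : Prop :=
  ε < torusDist z.1 w.1

/-- The one-particle activity `μ_ε 𝓜(v)` of the hard-sphere gas. -/
def activity (d : ℕ) (ε : ℝ) (z : Phase d) : ℝ :=
  muBG d ε * maxwellian z.2

/-- The equilibrium measure of the hard-sphere gas. -/
def equilibrium (d : ℕ) (ε : ℝ) : Measure (Config (Phase d)) :=
  gibbs volume (Separated ε) (activity d ε)

instance : IsProbabilityMeasure (volume : Measure (AddCircle (1 : ℝ))) :=
  ⟨by rw [AddCircle.measure_univ, ENNReal.ofReal_one]⟩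

lemma torusDist_comm (x y : Torus d) : torusDist x y = torusDist y x := by
  simp only [torusDist, dist_comm]

lemma measurableSet_separated :
    MeasurableSet {p : Phase d × Phase d | Separated ε p.1 p.2} := by
  unfold Separated torusDist
  exact measurableSet_lt measurable_const (by fun_prop)

lemma Separated.symm (z w : Phase d) (h : Separated ε z w) : Separated ε w z :=
  h.trans_eq (torusDist_comm z.1 w.1)

lemma measurable_maxwellian : Measurable (maxwellian (d := d)) := by
  unfold maxwellian
  fun_prop

lemma maxwellian_nonneg (v : EuclideanSpace ℝ (Fin d)) : 0 ≤ maxwellian v := by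
  unfold maxwellian
  positivity

lemma integral_maxwellian : ∫ v : EuclideanSpace ℝ (Fin d), maxwellian v = 1 := by
  have gaussian := GaussianFourier.integral_rexp_neg_mul_sq_norm (V := EuclideanSpace ℝ (Fin d))
    (b := 1 / 2) one_half_pos
  simp only [maxwellian, integral_const_mul, neg_div, div_eq_inv_mul (_ ^ 2), ← one_div (2 : ℝ),
    ← neg_mul]
  rw [gaussian, finrank_euclideanSpace_fin, div_div_eq_mul_div, div_one, mul_comm π,
    ← rpow_add (by positivity), neg_add_cancel, rpow_zero]

lemma integrable_maxwellian : Integrable (maxwellian (d := d)) :=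
  .of_integral_ne_zero (by rw [integral_maxwellian]; exact one_ne_zero)

lemma muBG_pos (hε : 0 < ε) : 0 < muBG d ε := by
  unfold muBG
  positivity

lemma integrable_activity : Integrable (activity d ε) :=
  (integrable_maxwellian.comp_snd volume).const_mul _

lemma integral_activity : ∫ z, activity d ε z = muBG d ε := by
  have := integral_prod_mul (μ := (volume : Measure (Torus d))) (ν := volume)
    (fun _ => muBG d ε) (maxwellian (d := d))
  simpa [integral_maxwellian] using! this

lemma isActivity_activity (hε : 0 < ε) : IsActivity (activity d ε) (activity d ε) where
  measurable := (measurable_maxwellian.comp measurable_snd).const_mul _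
  nonneg z := mul_nonneg (muBG_pos hε).le (maxwellian_nonneg z.2)
  le _ := le_rfl

lemma excluded_separated_subset (x : Phase d) :
    excluded (Separated ε) x ⊆ (Set.univ.pi fun i => Metric.closedBall (x.1 i) ε) ×ˢ Set.univ := by
  intro y hy
  refine ⟨fun i _ => ?_, Set.mem_univ _⟩
  have hdist : torusDist x.1 y.1 ≤ ε := not_lt.1 hy
  rw [Metric.mem_closedBall']
  refine (le_sqrt_of_sq_le ?_).trans hdist
  exact Finset.single_le_sum (f := fun i => dist (x.1 i) (y.1 i) ^ 2)
    (fun i _ => sq_nonneg _) (Finset.mem_univ i)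

lemma volume_pi_closedBall_le (x : Torus d) (hε : 0 < ε) :
    volume.real (Set.univ.pi fun i => Metric.closedBall (x i) ε) ≤ (2 * ε) ^ d := by
  refine ENNReal.toReal_le_of_le_ofReal (by positivity) ?_
  rw [volume_pi, Measure.pi_pi, ENNReal.ofReal_pow (by positivity)]
  refine (Finset.prod_le_pow_card _ _ (ENNReal.ofReal (2 * ε)) fun i _ => ?_).trans_eq (by simp)
  rw [AddCircle.volume_closedBall]
  exact ENNReal.ofReal_le_ofReal (min_le_right _ _)

lemma setIntegral_excluded_activity_le (hε : 0 < ε) (x : Phase d) :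
    ∫ z in excluded (Separated ε) x, activity d ε z ≤ muBG d ε * (2 * ε) ^ d :=
  calc ∫ z in excluded (Separated ε) x, activity d ε z
      ≤ ∫ z in (Set.univ.pi fun i => Metric.closedBall (x.1 i) ε) ×ˢ Set.univ, activity d ε z :=
        setIntegral_mono_set integrable_activity.integrableOn
          (.of_forall (isActivity_activity hε).nonneg)
          (excluded_separated_subset x).eventuallyLE
    _ = volume.real (Set.univ.pi fun i => Metric.closedBall (x.1 i) ε) * muBG d ε := by
        have := setIntegral_prod_mul (μ := (volume : Measure (Torus d))) (ν := volume)
          (fun _ => muBG d ε) (maxwellian (d := d))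
          (Set.univ.pi fun i => Metric.closedBall (x.1 i) ε) Set.univ
        simpa [integral_maxwellian] using! this
    _ ≤ muBG d ε * (2 * ε) ^ d := by
        rw [mul_comm]
        exact mul_le_mul_of_nonneg_left (volume_pi_closedBall_le x.1 hε) (muBG_pos hε).le

lemma weight_separated_activity {N : ℕ} (Z : Fin N → Phase d) :
    weight (Separated ε) (activity d ε) ⟨N, Z⟩ =
      muBG d ε ^ N * (exclInd ε (fun i => (Z i).1) * ∏ i, maxwellian (Z i).2) := by
  classical
  simp [weight, admissible, exclInd, activity, Set.indicator_apply, Finset.prod_mul_distrib,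
    Pairwise, Function.onFun, Separated]

lemma integral_exclInd_mul_prod_maxwellian (N : ℕ) :
    ∫ Z : Fin N → Phase d, exclInd ε (fun i => (Z i).1) * ∏ i, maxwellian (Z i).2 =
      ∫ X : Fin N → Torus d, exclInd ε X := by
  have hsplit := (volume_measurePreserving_arrowProdEquivProdArrow (Torus d)
    (EuclideanSpace ℝ (Fin d)) (Fin N)).integral_comp'
    (fun p => exclInd ε p.1 * ∏ i, maxwellian (p.2 i))
  refine hsplit.trans ?_
  rw [Measure.volume_eq_prod, integral_prod_mul (exclInd ε)
    (fun V : Fin N → EuclideanSpace ℝ (Fin d) => ∏ i, maxwellian (V i)),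
    integral_fintype_prod_volume_eq_pow, integral_maxwellian, one_pow, mul_one]

lemma tsum_integral_weight_mul {F : Config (Phase d) → ℝ}
    (hF : Integrable (fun ω => weight (Separated ε) (activity d ε) ω * F ω)
      (lebesguePoisson volume)) :
    ∑' N : ℕ, muBG d ε ^ N / (Nat.factorial N : ℝ) * ∫ Z : Fin N → Phase d,
        exclInd ε (fun i => (Z i).1) * (∏ i, maxwellian (Z i).2) * F ⟨N, Z⟩ =
      ∫ ω, weight (Separated ε) (activity d ε) ω * F ω ∂lebesguePoisson volume := by
  rw [← (hasSum_integral_lebesguePoisson hF).tsum_eq]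
  refine tsum_congr fun N => ?_
  simp only [weight_separated_activity, mul_assoc (muBG d ε ^ N), integral_const_mul]
  rw [volume_pi]
  ring

lemma partitionZ_eq (hε : 0 < ε) :
    partitionZ d ε = partition volume (Separated ε) (activity d ε) := by
  have hact := isActivity_activity (d := d) hε
  have hsum := tsum_integral_weight_mul (d := d) (ε := ε) (F := 1) (by
    simpa using integrable_weight measurableSet_separated integrable_activity hact.measurable
      hact.abs_le)
  simpa [integral_exclInd_mul_prod_maxwellian] using! hsum

lemma gceExp_eq_integral (hε : 0 < ε) {F : Config (Phase d) → ℝ}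
    (hF : Integrable F (equilibrium d ε)) :
    gceExp d ε (fun N Z => F ⟨N, Z⟩) = ∫ ω, F ω ∂equilibrium d ε := by
  have hact := isActivity_activity (d := d) hε
  rw [equilibrium, integrable_gibbs_iff measurableSet_separated integrable_activity hact] at hF
  rw [equilibrium, integral_gibbs measurableSet_separated integrable_activity hact, gceExp,
    tsum_integral_weight_mul hF, partitionZ_eq hε, inv_mul_eq_div]

end HardSpheres

section FluctuationField

variable {d : ℕ} {ε : ℝ} {h : Phase d → ℝ}

lemma one_le_muBG (hε : 0 < ε) (hε₁ : ε ≤ 1) : 1 ≤ muBG d ε :=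
  (one_le_inv₀ (by positivity)).2 (pow_le_one₀ hε.le hε₁)

lemma muBG_mul_two_mul_pow (hd : d ≠ 0) (hε : 0 < ε) : muBG d ε * (2 * ε) ^ d = 2 ^ d * ε := by
  rw [muBG, mul_pow, ← pow_sub_one_mul hd ε]
  field_simp

lemma gceExp_const_mul (c : ℝ) (F : (N : ℕ) → (Fin N → Phase d) → ℝ) :
    gceExp d ε (fun N Z => c * F N Z) = c * gceExp d ε F := by
  simp only [gceExp, mul_left_comm _ c, integral_const_mul, tsum_mul_left]

lemma fluctField_const_mul (c : ℝ) {N : ℕ} (Z : Fin N → Phase d) :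
    fluctField d ε (fun z => c * h z) N Z = c * fluctField d ε h N Z := by
  have empDens_const_mul (M : ℕ) (W : Fin M → Phase d) :
      empDens ε (fun z => c * h z) M W = c * empDens ε h M W := by
    simp only [empDens, ← Finset.mul_sum, mul_left_comm]
  simp only [fluctField, empDens_const_mul, gceExp_const_mul, ← mul_sub, mul_left_comm]

lemma fluctField_eq (hε : 0 < ε) (hh : Integrable (linearStatistic h) (equilibrium d ε))
    (ω : Config (Phase d)) :
    fluctField d ε h ω.1 ω.2 = linearStatistic (fun z => (√(muBG d ε))⁻¹ * h z) ω -
      ∫ ω', linearStatistic (fun z => (√(muBG d ε))⁻¹ * h z) ω' ∂equilibrium d ε := by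
  have hmean : gceExp d ε (fun N Z => empDens ε h N Z) =
      (muBG d ε)⁻¹ * ∫ ω', linearStatistic h ω' ∂equilibrium d ε := by
    rw [← gceExp_eq_integral hε hh, ← gceExp_const_mul]
    rfl
  have hscale : √(muBG d ε) * (muBG d ε)⁻¹ = (√(muBG d ε))⁻¹ := by
    rw [← div_eq_mul_inv, sqrt_div_self']
    exact one_div _
  simp only [linearStatistic_const_mul, integral_const_mul]
  rw [fluctField, hmean, empDens, ← mul_sub, ← mul_assoc, hscale, mul_sub]
  rfl

lemma abs_gceExp_fluctField_pow_le_of_abs_le_one (hd : d ≠ 0) (p : ℕ) (hε : 0 < ε)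
    (hε₀ : ε ≤ 1 / (6 * 2 ^ d)) (hh : Measurable h) (h_le : ∀ z, |h z| ≤ 1) :
    |gceExp d ε (fun N Z => fluctField d ε h N Z ^ p)| ≤ 2 * p.factorial * exp 6 := by
  have hε₁ : 6 * (2 ^ d * ε) ≤ 1 := by
    rwa [le_div_iff₀ (by positivity), mul_comm, mul_assoc] at hε₀
  have hμ : 1 ≤ muBG d ε := one_le_muBG hε <| by
    nlinarith [one_le_pow₀ (M₀ := ℝ) one_le_two (n := d)]
  set τ := (√(muBG d ε))⁻¹
  have hτ : 0 ≤ τ := by positivity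
  have hexp : exp τ ≤ 3 := by
    have hτ₁ : τ ≤ 1 := inv_le_one_of_one_le₀ (one_le_sqrt.2 hμ)
    linarith [exp_le_exp.2 hτ₁, exp_one_lt_three]
  have hτμ : τ ^ 2 * muBG d ε = 1 := by
    rw [inv_pow, sq_sqrt (by linarith), inv_mul_cancel₀ (by linarith)]
  have hsmall (x : Phase d) :
      ∫ z in excluded (Separated ε) x, exp τ * activity d ε z ≤ 1 / 2 := by
    rw [integral_const_mul]
    have := setIntegral_excluded_activity_le hε x
    rw [muBG_mul_two_mul_pow hd hε] at this
    nlinarith [exp_pos τ, mul_pos (pow_pos two_pos d) hε]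
  have hg (z : Phase d) : |τ * h z| ≤ τ := by
    rw [abs_mul, abs_of_nonneg hτ]
    exact mul_le_of_le_one_right hτ (h_le z)
  have hact := isActivity_activity (d := d) hε
  have hfluct := fluctField_eq hε
    (integrable_linearStatistic measurableSet_separated integrable_activity hact hh h_le)
  rw [gceExp_eq_integral hε (F := fun ω => fluctField d ε h ω.1 ω.2 ^ p)]
  · simp only [hfluct]
    refine (abs_integral_centred_linearStatistic_pow_le measurableSet_separated integrable_activity
      hact (hh.const_mul τ) hg Separated.symm hτ hsmall p).trans ?_
    rw [integral_activity]
    gcongr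
    linear_combination 2 * hexp + 2 * exp τ * hτμ
  · simp only [hfluct]
    exact integrable_linearStatistic_sub_pow measurableSet_separated integrable_activity hact
      (hh.const_mul τ) hg _ p

end FluctuationField

end PairExclusion

theorem moment_bounds_fluctField_general {d : ℕ} (hd : d ≠ 0) (p : ℕ) {ε : ℝ} (hε : 0 < ε)
    (hε₀ : ε ≤ 1 / (6 * 2 ^ d)) {h : Phase d → ℝ} (hh : Measurable h) {B : ℝ}
    (hB : ∀ z, |h z| ≤ B) :
    |gceExp d ε (fun N Z => fluctField d ε h N Z ^ p)| ≤ 2 * p.factorial * exp 6 * B ^ p := by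
  have hB₀ : 0 ≤ B := (abs_nonneg _).trans (hB 0)
  have hscale (z : Phase d) : B * (h z / B) = h z :=
    mul_div_cancel_of_imp' fun hB0 => abs_nonpos_iff.1 (hB0 ▸ hB z)
  have h_le (z : Phase d) : |h z / B| ≤ 1 := by
    rw [abs_div, abs_of_nonneg hB₀]
    exact div_le_one_of_le₀ (hB z) hB₀
  have unit_bound := PairExclusion.abs_gceExp_fluctField_pow_le_of_abs_le_one hd p hε hε₀
    (hh.div_const B) h_le
  calc |gceExp d ε (fun N Z => fluctField d ε h N Z ^ p)|
      = B ^ p * |gceExp d ε (fun N Z => fluctField d ε (fun z => h z / B) N Z ^ p)| := by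
        rw [← abs_of_nonneg (pow_nonneg hB₀ p), ← abs_mul, ← PairExclusion.gceExp_const_mul]
        simp only [← mul_pow, ← PairExclusion.fluctField_const_mul, hscale]
    _ ≤ B ^ p * (2 * p.factorial * exp 6) := by gcongr
    _ = 2 * p.factorial * exp 6 * B ^ p := mul_comm _ _

/-- Uniform moment bounds for the equilibrium fluctuation field: for every `p ≥ 1`
there is `C_p > 0` (depending only on `p` and `d`) such that for all small enough
`ε > 0` and every bounded measurable `h`,
`|𝔼^eq_ε[(ζ^{ε,eq}(h))^p]| ≤ C_p ‖h‖_∞^p` (here `B` is any uniform bound on `|h|`). -/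
theorem moment_bounds_fluctField (d : ℕ) (hd : 2 ≤ d) (p : ℕ) (hp : 1 ≤ p) :
    ∃ C : ℝ, 0 < C ∧ ∃ ε₀ : ℝ, 0 < ε₀ ∧
      ∀ ε : ℝ, 0 < ε → ε < ε₀ →
        ∀ h : Phase d → ℝ, Measurable h →
          ∀ B : ℝ, 0 ≤ B → (∀ z, |h z| ≤ B) →
            |gceExp d ε (fun N Z => fluctField d ε h N Z ^ p)| ≤ C * B ^ p :=
  ⟨2 * p.factorial * exp 6, by positivity, 1 / (6 * 2 ^ d), by positivity,
    fun _ hε hε₀ _ hh _ _ hB =>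
      moment_bounds_fluctField_general (by omega) p hε hε₀.le hh hB⟩
end

section
/- (Convergence of the equal-time covariance, identifying the white-noise covariance (1.13).) Let d ≥ 2. For all bounded measurable functions h^{(1)}, h^{(2)} : 𝕋^d × ℝ^d → ℝ, the equilibrium covariance of the fluctuation field converges in the Boltzmann–Grad limit: 𝔼^eq_ε[ ζ^{ε,eq}(h^{(1)}) ζ^{ε,eq}(h^{(2)}) ] → ∫_{𝕋^d×ℝ^d} h^{(1)}(z) h^{(2)}(z) 𝓜(v) dz as ε → 0. -/
open MeasureTheory Real

/-!
By the Mecke formula, the covariance of two linear statistics of a repulsive gas of activity `l` is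
expressed through the insertion ratio `Q(l, x)`, the ratio of the partition functions at the
activities `l * c x` and `l`, and through the change of the mean of a linear statistic when a point
is inserted. Switching off the interaction with `x` along a segment of activities writes
`log Q(l, x)` as an integral of `1 - c x` against the one-point correlation function. With
`β = sup_x ∫ |1 - c x| dν ≤ 1/2`, this fixed-point equation is a contraction, so that `1 - Q` and
the total influence of an inserted point on `Q` are both at most `β`. Hence the covariance is within
`3 β |B₁| |B₂| ν(E)` of its ideal-gas value `∫ l h₁ h₂ dν`. For hard spheres in the Boltzmann–Grad
scaling, `β` is the activity `μ_ε` times the excluded volume, at most `μ_ε (2 ε) ^ d = 2 ^ d ε`.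
-/

noncomputable section

section SigmaMeasurable

variable {ι : Type*} {X : ι → Type*} [∀ i, MeasurableSpace (X i)]

theorem measurableEmbedding_sigmaMk (i : ι) :
    MeasurableEmbedding (Sigma.mk i : X i → Sigma X) where
  injective := sigma_mk_injective
  measurable := Measurable.of_le_map (iInf_le _ i)
  measurableSet_image' s hs := by
    refine MeasurableSpace.measurableSet_iInf.2 fun j => ?_
    change MeasurableSet (Sigma.mk j ⁻¹' (Sigma.mk i '' s))
    by_cases h : i = j
    · subst h
      rwa [Set.preimage_image_eq _ sigma_mk_injective]
    · convert MeasurableSet.empty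
      ext x
      simpa using fun y _ hij => absurd hij h

theorem measurable_of_comp_sigmaMk {β : Type*} [MeasurableSpace β] {f : Sigma X → β}
    (hf : ∀ i, Measurable fun x => f ⟨i, x⟩) : Measurable f := fun _ hs =>
  MeasurableSpace.measurableSet_iInf.2 fun i => hf i hs

theorem measurable_of_comp_prodMap_sigmaMk [Countable ι] {α β : Type*} [MeasurableSpace α]
    [MeasurableSpace β] {f : α × Sigma X → β}
    (hf : ∀ i, Measurable fun p : α × X i => f (p.1, ⟨i, p.2⟩)) : Measurable f := by
  intro s hs
  have hunion : f ⁻¹' s =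
      ⋃ i, Prod.map id (Sigma.mk i) '' ((fun p => f (p.1, ⟨i, p.2⟩)) ⁻¹' s) := by
    ext ⟨a, i, x⟩
    simp only [Set.mem_preimage, Set.mem_iUnion, Set.mem_image, Prod.exists]
    constructor
    · exact fun h => ⟨i, a, x, h, rfl⟩
    · rintro ⟨j, b, y, h, hby⟩
      cases hby
      exact h
  rw [hunion]
  exact .iUnion fun i =>
    (MeasurableEmbedding.id.prodMap (measurableEmbedding_sigmaMk i)).measurableSet_image.2 (hf i hs)

end SigmaMeasurable

/-- Finite configurations of labelled points of `E`: the disjoint union `⨆_N E^N`. -/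
abbrev Config (E : Type*) := Σ N : ℕ, Fin N → E

namespace Config

variable {E : Type*}

/-- The linear statistic `∑ᵢ h(xᵢ)`. -/
def sum (h : E → ℝ) (X : Config E) : ℝ := ∑ i, h (X.2 i)

/-- The multiplicative statistic `∏ᵢ l(xᵢ)`. -/
def prod (l : E → ℝ) (X : Config E) : ℝ := ∏ i, l (X.2 i)

/-- The configuration with its `i`-th point removed. -/
def erase : (X : Config E) → Fin X.1 → Config E
  | ⟨0, X⟩, _ => ⟨0, X⟩
  | ⟨N + 1, X⟩, i => ⟨N, i.removeNth X⟩

/-- The Boltzmann weight `∏_{i<j} c(xᵢ, xⱼ)` of the pair interaction whose Mayer factor is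
`c - 1`. -/
def weight (c : E → E → ℝ) (X : Config E) : ℝ :=
  ∏ i, ∏ j, if i < j then c (X.2 i) (X.2 j) else 1

theorem prod_mul (l k : E → ℝ) (X : Config E) : X.prod (l * k) = X.prod l * X.prod k :=
  Finset.prod_mul_distrib

theorem prod_one (X : Config E) : X.prod 1 = 1 := Finset.prod_const_one

theorem card_erase_le (X : Config E) (i : Fin X.1) : (X.erase i).1 ≤ X.1 := by
  obtain ⟨_ | N, X⟩ := X
  · exact le_rfl
  · exact N.le_succ

theorem sum_eq_add_sum_erase (h : E → ℝ) (X : Config E) (i : Fin X.1) :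
    X.sum h = h (X.2 i) + (X.erase i).sum h := by
  obtain ⟨_ | N, X⟩ := X
  · exact i.elim0
  · exact Fin.sum_univ_succAbove _ i

theorem prod_erase_eq (l : E → ℝ) (X : Config E) (i : Fin X.1) :
    (X.erase i).prod l = ∏ j ∈ Finset.univ.erase i, l (X.2 j) := by
  obtain ⟨_ | N, X⟩ := X
  · exact i.elim0
  · rw [← Finset.compl_singleton, ← Fin.image_succAbove_univ,
      Finset.prod_image Fin.succAbove_right_injective.injOn]
    rfl

theorem prod_eq_mul_prod_erase (l : E → ℝ) (X : Config E) (i : Fin X.1) :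
    X.prod l = l (X.2 i) * (X.erase i).prod l := by
  rw [prod_erase_eq, Finset.mul_prod_erase _ (fun j => l (X.2 j)) (Finset.mem_univ i), prod]

theorem weight_eq_mul_prod_erase {c : E → E → ℝ} (hc : ∀ x y, c x y = c y x) (X : Config E)
    (i : Fin X.1) : X.weight c = (X.erase i).weight c * (X.erase i).prod (c (X.2 i)) := by
  obtain ⟨_ | N, X⟩ := X
  · exact i.elim0
  · change weight c ⟨N + 1, X⟩ = weight c ⟨N, i.removeNth X⟩ * prod (c (X i)) ⟨N, i.removeNth X⟩
    have hpair (j : Fin N) : (if i < i.succAbove j then c (X i) (X (i.succAbove j)) else 1) *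
        (if i.succAbove j < i then c (X (i.succAbove j)) (X i) else 1) =
          c (X i) (X (i.succAbove j)) := by
      rcases (Fin.succAbove_ne i j).lt_or_gt with h | h <;> simp [h, h.not_gt, hc]
    simp only [weight, prod, Fin.removeNth, Fin.prod_univ_succAbove _ i, lt_irrefl, if_false,
      one_mul, Fin.succAbove_lt_succAbove_iff, Finset.prod_mul_distrib]
    rw [Finset.prod_congr rfl fun j _ => (hpair j).symm, Finset.prod_mul_distrib]
    ring

theorem abs_sum_le_mul_two_pow {h : E → ℝ} {B : ℝ} (hB : ∀ x, |h x| ≤ B) (X : Config E) :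
    |X.sum h| ≤ |B| * 2 ^ X.1 := by
  have hcard : (X.1 : ℝ) ≤ 2 ^ X.1 := by exact_mod_cast Nat.lt_two_pow_self.le
  calc |X.sum h|
    _ ≤ ∑ i, |h (X.2 i)| := Finset.abs_sum_le_sum_abs _ _
    _ ≤ X.1 * |B| :=
      (Finset.sum_le_sum fun i _ => (hB _).trans (le_abs_self B)).trans_eq (by simp)
    _ ≤ |B| * 2 ^ X.1 := by rw [mul_comm]; gcongr

theorem abs_prod_le {l : E → ℝ} {K : ℝ} (hK : ∀ x, |l x| ≤ K) (X : Config E) :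
    |X.prod l| ≤ K ^ X.1 := by
  rw [prod, Finset.abs_prod]
  exact (Finset.prod_le_prod (fun _ _ => abs_nonneg _) fun i _ => hK _).trans_eq (by simp)

theorem hasDerivAt_prod_add_smul (a b : E → ℝ) (X : Config E) (t : ℝ) :
    HasDerivAt (fun t : ℝ => X.prod (a + t • b))
      (∑ i, b (X.2 i) * (X.erase i).prod (a + t • b)) t := by
  have hfactor (i : Fin X.1) : HasDerivAt (fun t : ℝ => (a + t • b) (X.2 i)) (b (X.2 i)) t := by
    simpa using ((hasDerivAt_id t).mul_const (b (X.2 i))).const_add (a (X.2 i))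
  simp only [prod_erase_eq, mul_comm (b _)]
  exact HasDerivAt.fun_finsetProd (u := Finset.univ) fun i _ => hfactor i

theorem abs_prod_erase_le {l : E → ℝ} {K : ℝ} (hK : 1 ≤ K) (hl : ∀ x, |l x| ≤ K) (X : Config E)
    (i : Fin X.1) : |(X.erase i).prod l| ≤ K ^ X.1 :=
  (abs_prod_le hl _).trans (pow_le_pow_right₀ hK (X.card_erase_le i))

variable [MeasurableSpace E] {α : Type*} [MeasurableSpace α]

theorem measurable_card : Measurable fun X : Config E => X.1 :=
  measurable_of_comp_sigmaMk fun _ => measurable_const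

theorem measurable_sum {h : E → ℝ} (hh : Measurable h) : Measurable (sum h) :=
  measurable_of_comp_sigmaMk fun N => by
    exact Finset.univ.measurable_fun_sum fun i _ => hh.comp (measurable_pi_apply i)

theorem measurable_prod_uncurry {l : α → E → ℝ} (hl : Measurable (Function.uncurry l)) :
    Measurable fun p : α × Config E => p.2.prod (l p.1) :=
  measurable_of_comp_prodMap_sigmaMk fun N => by
    have hfactor (i : Fin N) : Measurable fun p : α × (Fin N → E) => l p.1 (p.2 i) := by fun_prop
    exact Finset.univ.measurable_fun_prod fun i _ => hfactor i

theorem measurable_prod {l : E → ℝ} (hl : Measurable l) : Measurable (prod l) :=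
  measurable_of_comp_sigmaMk fun N => by
    exact Finset.univ.measurable_fun_prod fun i _ => hl.comp (measurable_pi_apply i)

theorem measurable_weight {c : E → E → ℝ} (hc : Measurable (Function.uncurry c)) :
    Measurable (weight c) :=
  measurable_of_comp_sigmaMk fun N => by
    simp only [weight]
    refine Finset.univ.measurable_fun_prod fun i _ => Finset.univ.measurable_fun_prod fun j _ => ?_
    by_cases h : i < j <;> simp only [h, if_true, if_false] <;> fun_prop

end Config

/-! ### The ideal gas and the Mecke formula -/

section FreeGas

open scoped ENNReal Nat

variable {E : Type*} [MeasurableSpace E] {ν : Measure E}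

/-- The free (ideal) gas `∑_N ν^{⊗N} / N!` of intensity `ν`: a Poisson process of intensity `ν`
without its normalisation `exp (-ν(E))`. -/
def freeGas (ν : Measure E) : Measure (Config E) :=
  Measure.sum fun N => (N ! : ℝ≥0∞)⁻¹ • (Measure.pi fun _ : Fin N => ν).map (Sigma.mk N)

theorem lintegral_freeGas (ν : Measure E) (F : Config E → ℝ≥0∞) :
    ∫⁻ X, F X ∂freeGas ν =
      ∑' N : ℕ, (N ! : ℝ≥0∞)⁻¹ * ∫⁻ x, F ⟨N, x⟩ ∂Measure.pi fun _ => ν := by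
  simp only [freeGas, lintegral_sum_measure, lintegral_smul_measure, smul_eq_mul,
    (measurableEmbedding_sigmaMk _).lintegral_map]

theorem hasSum_integral_freeGas {F : Config E → ℝ} (hF : Integrable F (freeGas ν)) :
    HasSum (fun N : ℕ => (N ! : ℝ)⁻¹ * ∫ x, F ⟨N, x⟩ ∂Measure.pi fun _ => ν)
      (∫ X, F X ∂freeGas ν) := by
  unfold freeGas at hF ⊢
  simpa only [integral_smul_measure, (measurableEmbedding_sigmaMk _).integral_map, smul_eq_mul,
    ENNReal.toReal_inv, ENNReal.toReal_natCast] using hasSum_integral_measure hF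

variable [IsFiniteMeasure ν]

theorem lintegral_pow_card_freeGas {K : ℝ} (hK : 0 ≤ K) :
    ∫⁻ X : Config E, ENNReal.ofReal (K ^ X.1) ∂freeGas ν =
      ENNReal.ofReal (exp (K * ν.real Set.univ)) := by
  have hnonneg (N : ℕ) : 0 ≤ (K * ν.real Set.univ) ^ N / (N ! : ℝ) := by positivity
  have hterm (N : ℕ) : (N ! : ℝ≥0∞)⁻¹ * ∫⁻ _, ENNReal.ofReal (K ^ N) ∂(Measure.pi
      fun _ : Fin N => ν) = ENNReal.ofReal ((K * ν.real Set.univ) ^ N / (N ! : ℝ)) := by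
    rw [lintegral_const, Measure.pi_univ, Finset.prod_const, Finset.card_univ, Fintype.card_fin,
      ← ofReal_measureReal, ← ENNReal.ofReal_pow measureReal_nonneg,
      ← ENNReal.ofReal_mul (by positivity), ← mul_pow, ← ENNReal.ofReal_natCast,
      ← ENNReal.ofReal_inv_of_pos (by positivity), ← ENNReal.ofReal_mul (by positivity),
      inv_mul_eq_div]
  rw [lintegral_freeGas, tsum_congr hterm,
    ← ENNReal.ofReal_tsum_of_nonneg hnonneg (Real.summable_pow_div_factorial _), exp_eq_exp_ℝ,
    NormedSpace.exp_eq_tsum_div]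

instance : IsFiniteMeasure (freeGas ν) where
  measure_univ_lt_top := by
    simpa using lintegral_pow_card_freeGas (ν := ν) zero_le_one |>.trans_lt ENNReal.ofReal_lt_top

theorem integrable_pow_card_freeGas {K : ℝ} (hK : 0 ≤ K) :
    Integrable (fun X : Config E => K ^ X.1) (freeGas ν) := by
  refine ⟨((measurable_of_countable _).comp Config.measurable_card).aestronglyMeasurable, ?_⟩
  rw [hasFiniteIntegral_iff_ofReal (ae_of_all _ fun X => by positivity),
    lintegral_pow_card_freeGas hK]
  exact ENNReal.ofReal_lt_top

theorem integrable_freeGas_of_abs_le_pow {F : Config E → ℝ} (hF : Measurable F) {C K : ℝ}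
    (hK : 0 ≤ K) (hle : ∀ X, |F X| ≤ C * K ^ X.1) : Integrable F (freeGas ν) :=
  ((integrable_pow_card_freeGas hK).const_mul C).mono' hF.aestronglyMeasurable (ae_of_all _ hle)

theorem integrable_prod_freeGas_of_abs_le_pow {G : E × Config E → ℝ} (hG : Measurable G)
    {C K : ℝ} (hK : 0 ≤ K) (hle : ∀ p, |G p| ≤ C * K ^ p.2.1) :
    Integrable G (ν.prod (freeGas ν)) :=
  (((integrable_pow_card_freeGas hK).const_mul C).comp_snd ν).mono' hG.aestronglyMeasurable
    (ae_of_all _ hle)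

theorem memLp_sum_freeGas {h : E → ℝ} (hh : Measurable h) {B : ℝ} (hB : ∀ x, |h x| ≤ B) :
    MemLp (Config.sum h) 2 (freeGas ν) := by
  have hmeas := Config.measurable_sum hh
  refine (memLp_two_iff_integrable_sq hmeas.aestronglyMeasurable).2 ?_
  refine integrable_freeGas_of_abs_le_pow (C := |B| ^ 2) (K := 4) (hmeas.pow_const 2)
    (by norm_num) fun X => ?_
  calc |X.sum h ^ 2|
    _ = |X.sum h| ^ 2 := abs_pow _ _
    _ ≤ (|B| * 2 ^ X.1) ^ 2 := by gcongr; exact X.abs_sum_le_mul_two_pow hB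
    _ = |B| ^ 2 * 4 ^ X.1 := by
      rw [mul_pow, ← pow_mul, mul_comm X.1, pow_mul]
      norm_num

theorem measurable_sum_erase {β : Type*} [AddCommMonoid β] [MeasurableSpace β] [MeasurableAdd₂ β]
    {G : E × Config E → β} (hG : Measurable G) :
    Measurable fun X : Config E => ∑ i, G (X.2 i, X.erase i) := by
  refine measurable_of_comp_sigmaMk fun N => ?_
  obtain _ | N := N
  · exact measurable_const (a := (0 : β))
  · change Measurable fun x : Fin (N + 1) → E => ∑ i, G (x i, ⟨N, i.removeNth x⟩)
    exact Finset.univ.measurable_fun_sum fun i _ => hG.comp ((measurable_pi_apply i).prodMk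
      ((measurableEmbedding_sigmaMk N).measurable.comp
        (measurable_pi_lambda _ fun j => measurable_pi_apply _)))

theorem lintegral_pi_sum_erase {G : E × Config E → ℝ≥0∞} (hG : Measurable G) (N : ℕ) :
    ∫⁻ x, ∑ i, G (x i, ⟨N, i.removeNth x⟩) ∂Measure.pi (fun _ : Fin (N + 1) => ν) =
      (N + 1) * ∫⁻ x, ∫⁻ w, G (w, ⟨N, x⟩) ∂ν ∂Measure.pi fun _ : Fin N => ν := by
  have hGN : Measurable fun q : E × (Fin N → E) => G (q.1, ⟨N, q.2⟩) := hG.comp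
    (measurable_fst.prodMk ((measurableEmbedding_sigmaMk N).measurable.comp measurable_snd))
  have hmp (i : Fin (N + 1)) := measurePreserving_piFinSuccAbove (fun _ => ν) i
  have hterm (i : Fin (N + 1)) :
      ∫⁻ x, G (x i, ⟨N, i.removeNth x⟩) ∂Measure.pi (fun _ : Fin (N + 1) => ν) =
        ∫⁻ x, ∫⁻ w, G (w, ⟨N, x⟩) ∂ν ∂Measure.pi fun _ : Fin N => ν := by
    rw [← lintegral_prod_symm _ hGN.aemeasurable]
    exact (hmp i).lintegral_comp hGN
  have hmeas (i : Fin (N + 1)) :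
      Measurable fun x : Fin (N + 1) → E => G (x i, ⟨N, i.removeNth x⟩) :=
    hGN.comp (hmp i).measurable
  rw [lintegral_finsetSum _ fun i _ => hmeas i]
  simp [hterm]

/-- Mecke formula. -/
theorem lintegral_freeGas_sum_erase {G : E × Config E → ℝ≥0∞} (hG : Measurable G) :
    ∫⁻ X, ∑ i, G (X.2 i, X.erase i) ∂freeGas ν = ∫⁻ p, G p ∂ν.prod (freeGas ν) := by
  have hfactorial (N : ℕ) : ((N + 1)! : ℝ≥0∞)⁻¹ * (N + 1) = (N ! : ℝ≥0∞)⁻¹ := by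
    rw [Nat.factorial_succ, Nat.cast_mul, Nat.cast_succ, ENNReal.mul_inv (by simp) (by simp),
      mul_right_comm, ENNReal.inv_mul_cancel (by simp) (by finiteness), one_mul]
  rw [lintegral_prod_symm _ hG.aemeasurable, lintegral_freeGas, lintegral_freeGas,
    tsum_eq_zero_add' ENNReal.summable]
  change (_ * ∫⁻ x, ∑ i : Fin 0, G (x i, _) ∂_) +
    ∑' N : ℕ, (_ * ∫⁻ x, ∑ i : Fin (N + 1), G (x i, ⟨N, i.removeNth x⟩) ∂_) = _
  simp only [Finset.univ_eq_empty, Finset.sum_empty, lintegral_zero, mul_zero, zero_add]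
  refine tsum_congr fun N => ?_
  rw [lintegral_pi_sum_erase hG, ← mul_assoc, hfactorial]

theorem integrable_freeGas_sum_erase {G : E × Config E → ℝ} (hG : Measurable G)
    (hint : Integrable G (ν.prod (freeGas ν))) :
    Integrable (fun X : Config E => ∑ i, G (X.2 i, X.erase i)) (freeGas ν) := by
  refine ⟨(measurable_sum_erase hG).aestronglyMeasurable, ?_⟩
  calc ∫⁻ X : Config E, ‖∑ i, G (X.2 i, X.erase i)‖ₑ ∂freeGas ν
    _ ≤ ∫⁻ X : Config E, ∑ i, ‖G (X.2 i, X.erase i)‖ₑ ∂freeGas ν :=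
      lintegral_mono fun X => enorm_sum_le _ _
    _ = ∫⁻ p, ‖G p‖ₑ ∂ν.prod (freeGas ν) := lintegral_freeGas_sum_erase hG.enorm
    _ < ∞ := hint.2

theorem integral_freeGas_sum_erase_of_nonneg {G : E × Config E → ℝ} (hG : Measurable G)
    (h0 : ∀ p, 0 ≤ G p) :
    ∫ X, ∑ i, G (X.2 i, X.erase i) ∂freeGas ν = ∫ p, G p ∂ν.prod (freeGas ν) := by
  rw [integral_eq_lintegral_of_nonneg_ae (ae_of_all _ fun X => Finset.sum_nonneg fun i _ => h0 _)
      (measurable_sum_erase hG).aestronglyMeasurable,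
    integral_eq_lintegral_of_nonneg_ae (ae_of_all _ h0) hG.aestronglyMeasurable,
    ← lintegral_freeGas_sum_erase hG.ennreal_ofReal]
  simp_rw [ENNReal.ofReal_sum_of_nonneg fun _ _ => h0 _]

theorem integral_freeGas_sum_erase {G : E × Config E → ℝ} (hG : Measurable G)
    (hint : Integrable G (ν.prod (freeGas ν))) :
    ∫ X, ∑ i, G (X.2 i, X.erase i) ∂freeGas ν = ∫ p, G p ∂ν.prod (freeGas ν) := by
  have hpos : Measurable fun p => max (G p) 0 := hG.max measurable_const
  have hneg : Measurable fun p => max (-G p) 0 := hG.neg.max measurable_const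
  calc ∫ X, ∑ i, G (X.2 i, X.erase i) ∂freeGas ν
    _ = ∫ X : Config E, (∑ i, max (G (X.2 i, X.erase i)) 0 -
          ∑ i, max (-G (X.2 i, X.erase i)) 0) ∂freeGas ν := by
      simp_rw [← Finset.sum_sub_distrib, max_zero_sub_max_neg_zero_eq_self]
    _ = ∫ p, (max (G p) 0 - max (-G p) 0) ∂ν.prod (freeGas ν) := by
      rw [integral_sub (integrable_freeGas_sum_erase hpos hint.pos_part)
          (integrable_freeGas_sum_erase hneg hint.neg_part),
        integral_sub hint.pos_part hint.neg_part,
        integral_freeGas_sum_erase_of_nonneg hpos fun _ => le_max_right _ _,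
        integral_freeGas_sum_erase_of_nonneg hneg fun _ => le_max_right _ _]
    _ = ∫ p, G p ∂ν.prod (freeGas ν) := by simp_rw [max_zero_sub_max_neg_zero_eq_self]

end FreeGas

/-! ### Repulsive gases and their partition functions -/

section PartitionFunction

open Set
open scoped ENNReal NNReal unitInterval

variable {E : Type*}

/-- The path of activities from `l * c x` (at `t = 0`) to `l` (at `t = 1`), along which the
interaction with a point at `x` is switched off. -/
def interpolation (c : E → E → ℝ) (l : E → ℝ) (x : E) (t : ℝ) : E → ℝ :=
  l * c x + t • (l * (1 - c x))

theorem interpolation_zero (c : E → E → ℝ) (l : E → ℝ) (x : E) :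
    interpolation c l x 0 = l * c x := by
  simp [interpolation]

theorem interpolation_one (c : E → E → ℝ) (l : E → ℝ) (x : E) : interpolation c l x 1 = l := by
  simp [interpolation, mul_sub]

theorem interpolation_mul (c : E → E → ℝ) (l k : E → ℝ) (x : E) (t : ℝ) :
    interpolation c (l * k) x t = interpolation c l x t * k := by
  ext y
  simp [interpolation]
  ring

theorem abs_add_smul_le {a b : E → ℝ} {K : ℝ} (ha : ∀ x, |a x| ≤ K) (hb : ∀ x, |b x| ≤ K)
    {s r : ℝ} (hs : |s| ≤ r) (x : E) : |(a + s • b) x| ≤ K * (1 + r) := by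
  calc |a x + s * b x|
    _ ≤ |a x| + |s| * |b x| := (abs_add_le _ _).trans_eq (by rw [abs_mul])
    _ ≤ K + r * K :=
      add_le_add (ha x) (mul_le_mul hs (hb x) (abs_nonneg _) ((abs_nonneg s).trans hs))
    _ = K * (1 + r) := by ring

variable [MeasurableSpace E]

/-- `c = exp (-φ)` is the pair Boltzmann factor of a symmetric repulsive potential `φ ≥ 0`, the
value `φ = ∞` (hard core) being allowed. -/
structure IsRepulsive (c : E → E → ℝ) : Prop where
  measurable : Measurable (Function.uncurry c)
  symm : ∀ x y, c x y = c y x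
  mem_Icc : ∀ x y, c x y ∈ Icc (0 : ℝ) 1

/-- Activity profiles, normalised to take values in `[0, 1]`; the size of the activity is carried
by the reference measure. -/
structure IsActivity (l : E → ℝ) : Prop where
  measurable : Measurable l
  mem_Icc : ∀ x, l x ∈ Icc (0 : ℝ) 1

/-- The grand canonical partition function of the gas with pair Boltzmann factor `c` and intensity
`l • ν`. -/
def partitionFn (c : E → E → ℝ) (ν : Measure E) (l : E → ℝ) : ℝ :=
  ∫ X : Config E, X.weight c * X.prod l ∂freeGas ν

/-- The probability that a point inserted at `x` is compatible with the gas; `l` times this ratio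
is the one-point correlation function. -/
def insertionRatio (c : E → E → ℝ) (ν : Measure E) (l : E → ℝ) (x : E) : ℝ :=
  partitionFn c ν (l * c x) / partitionFn c ν l

variable {c : E → E → ℝ} {ν : Measure E} {l : E → ℝ}

theorem IsActivity.zero : IsActivity (0 : E → ℝ) :=
  ⟨measurable_const, fun _ => unitInterval.zero_mem⟩

theorem IsActivity.one : IsActivity (1 : E → ℝ) :=
  ⟨measurable_const, fun _ => unitInterval.one_mem⟩

theorem IsActivity.mul {k : E → ℝ} (hl : IsActivity l) (hk : IsActivity k) : IsActivity (l * k) :=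
  ⟨hl.measurable.mul hk.measurable, fun x => unitInterval.mul_mem (hl.mem_Icc x) (hk.mem_Icc x)⟩

theorem IsActivity.one_sub (hl : IsActivity l) : IsActivity (1 - l) :=
  ⟨measurable_const.sub hl.measurable, fun x =>
    ⟨sub_nonneg.2 (hl.mem_Icc x).2, sub_le_self 1 (hl.mem_Icc x).1⟩⟩

theorem IsActivity.abs_le_one (hl : IsActivity l) (x : E) : |l x| ≤ 1 :=
  abs_le.2 ⟨by linarith [(hl.mem_Icc x).1], (hl.mem_Icc x).2⟩

theorem IsActivity.enorm_le_one (hl : IsActivity l) (x : E) : ‖l x‖ₑ ≤ 1 := by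
  simpa [Real.enorm_eq_ofReal_abs] using hl.abs_le_one x

theorem IsActivity.integrable [IsFiniteMeasure ν] (hl : IsActivity l) : Integrable l ν :=
  .of_bound hl.measurable.aestronglyMeasurable 1 (ae_of_all _ hl.abs_le_one)

theorem IsActivity.prod_mem_Icc (hl : IsActivity l) (X : Config E) : X.prod l ∈ Icc (0 : ℝ) 1 :=
  unitInterval.prod_mem fun _ _ => hl.mem_Icc _

theorem IsRepulsive.isActivity (hc : IsRepulsive c) (x : E) : IsActivity (c x) :=
  ⟨hc.measurable.of_uncurry_left, hc.mem_Icc x⟩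

theorem IsRepulsive.weight_mem_Icc (hc : IsRepulsive c) (X : Config E) :
    X.weight c ∈ Icc (0 : ℝ) 1 := by
  refine unitInterval.prod_mem fun i _ => unitInterval.prod_mem fun j _ => ?_
  split_ifs
  exacts [hc.mem_Icc _ _, unitInterval.one_mem]

theorem isActivity_interpolation (hc : IsRepulsive c) (hl : IsActivity l) (x : E) {t : ℝ}
    (ht : t ∈ I) : IsActivity (interpolation c l x t) := by
  have hcx := (hc.isActivity x).measurable
  refine ⟨(hl.measurable.mul hcx).add ((hl.measurable.mul (measurable_const.sub hcx)).const_smul t),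
    fun y => ?_⟩
  have hconv := (convex_Icc (0 : ℝ) 1) (hc.mem_Icc x y) unitInterval.one_mem
    (sub_nonneg.2 ht.2) ht.1 (sub_add_cancel 1 t)
  convert unitInterval.mul_mem (hl.mem_Icc y) hconv using 1
  simp [interpolation]
  ring

theorem measurable_prod_mul (hc : IsRepulsive c) (hl : Measurable l) :
    Measurable fun p : E × Config E => p.2.prod (l * c p.1) :=
  Config.measurable_prod_uncurry (l := fun x => l * c x)
    ((hl.comp measurable_snd).mul hc.measurable)

/-- The absolute value of the Mayer function `c - 1`. -/
def mayerKernel (c : E → E → ℝ) (x y : E) : ℝ≥0∞ := ‖1 - c x y‖ₑ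

theorem measurable_mayerKernel (hc : IsRepulsive c) :
    Measurable (Function.uncurry (mayerKernel c)) :=
  (measurable_const.sub hc.measurable).enorm

theorem measurable_weight_mul_prod (hc : IsRepulsive c) (hl : Measurable l) :
    Measurable fun X : Config E => X.weight c * X.prod l :=
  (Config.measurable_weight hc.measurable).mul (Config.measurable_prod hl)

theorem weight_mul_prod_mem_Icc (hc : IsRepulsive c) (hl : IsActivity l) (X : Config E) :
    X.weight c * X.prod l ∈ Icc (0 : ℝ) 1 :=
  unitInterval.mul_mem (hc.weight_mem_Icc X) (hl.prod_mem_Icc X)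

theorem integrable_mul_weight_mul_prod (hc : IsRepulsive c) (hl : IsActivity l)
    {f : E × Config E → ℝ} (hf : Integrable f (ν.prod (freeGas ν))) :
    Integrable (fun p => l p.1 * f p * (p.2.weight c * p.2.prod (l * c p.1)))
      (ν.prod (freeGas ν)) := by
  have hweight (p : E × Config E) := weight_mul_prod_mem_Icc hc (hl.mul (hc.isActivity p.1)) p.2
  refine (hf.bdd_mul (c := 1) (hl.measurable.comp measurable_fst).aestronglyMeasurable
    (ae_of_all _ fun p => hl.abs_le_one p.1)).mul_bdd (c := 1)
    (((Config.measurable_weight hc.measurable).comp measurable_snd).mul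
      (measurable_prod_mul hc hl.measurable)).aestronglyMeasurable (ae_of_all _ fun p => ?_)
  rw [Real.norm_of_nonneg (hweight p).1]
  exact (hweight p).2

variable [IsFiniteMeasure ν]

/-- The interaction of the distinguished point with the others turns the activity `l` of the
latter into `l * c w`. -/
theorem integral_weight_mul_sum_erase (hc : IsRepulsive c) (hl : Measurable l)
    {f : E × Config E → ℝ} (hf : Measurable f)
    (hint : Integrable (fun p => f p * (p.2.weight c * p.2.prod (l * c p.1)))
      (ν.prod (freeGas ν))) :
    ∫ X, X.weight c * ∑ i, f (X.2 i, X.erase i) * (X.erase i).prod l ∂freeGas ν =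
      ∫ p, f p * (p.2.weight c * p.2.prod (l * c p.1)) ∂ν.prod (freeGas ν) := by
  have hmeas := hf.mul (((Config.measurable_weight hc.measurable).comp measurable_snd).mul
    (measurable_prod_mul hc hl))
  refine Eq.trans ?_ (integral_freeGas_sum_erase hmeas hint)
  refine integral_congr_ae (ae_of_all _ fun X => ?_)
  simp only [Finset.mul_sum]
  refine Finset.sum_congr rfl fun i _ => ?_
  rw [Config.weight_eq_mul_prod_erase hc.symm X i, Config.prod_mul]
  ring

theorem integrable_weight_mul_prod (hc : IsRepulsive c) (hl : Measurable l) {K : ℝ}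
    (hK : ∀ x, |l x| ≤ K) (hK0 : 0 ≤ K) :
    Integrable (fun X : Config E => X.weight c * X.prod l) (freeGas ν) := by
  refine integrable_freeGas_of_abs_le_pow (C := 1)
    (measurable_weight_mul_prod hc hl) hK0 fun X => ?_
  rw [abs_mul, abs_of_nonneg (hc.weight_mem_Icc X).1]
  exact mul_le_mul (hc.weight_mem_Icc X).2 (Config.abs_prod_le hK X) (abs_nonneg _) zero_le_one

theorem IsActivity.integrable_weight_mul_prod (hc : IsRepulsive c) (hl : IsActivity l) :
    Integrable (fun X : Config E => X.weight c * X.prod l) (freeGas ν) :=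
  _root_.integrable_weight_mul_prod hc hl.measurable hl.abs_le_one zero_le_one

/-- The empty configuration already contributes `1`. -/
theorem one_le_partitionFn (hc : IsRepulsive c) (hl : IsActivity l) : 1 ≤ partitionFn c ν l := by
  have hsum := hasSum_integral_freeGas (hl.integrable_weight_mul_prod (ν := ν) hc)
  have hterm (N : ℕ) : 0 ≤ (N.factorial : ℝ)⁻¹ *
      ∫ x, Config.weight c ⟨N, x⟩ * Config.prod l ⟨N, x⟩ ∂Measure.pi fun _ => ν :=
    mul_nonneg (by positivity) (integral_nonneg fun x => (weight_mul_prod_mem_Icc hc hl _).1)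
  refine le_trans ?_ (le_hasSum hsum 0 fun N _ => hterm N)
  simp [Config.weight, Config.prod, measureReal_def]

theorem partitionFn_pos (hc : IsRepulsive c) (hl : IsActivity l) : 0 < partitionFn c ν l :=
  zero_lt_one.trans_le (one_le_partitionFn hc hl)

theorem partitionFn_mul_le (hc : IsRepulsive c) {k : E → ℝ} (hl : IsActivity l)
    (hk : IsActivity k) : partitionFn c ν (l * k) ≤ partitionFn c ν l := by
  refine integral_mono ((hl.mul hk).integrable_weight_mul_prod hc)
    (hl.integrable_weight_mul_prod hc) fun X => ?_
  simp only [Config.prod_mul, ← mul_assoc]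
  exact mul_le_of_le_one_right (weight_mul_prod_mem_Icc hc hl X).1 (hk.prod_mem_Icc X).2

theorem insertionRatio_mem_Ioc (hc : IsRepulsive c) (hl : IsActivity l) (x : E) :
    insertionRatio c ν l x ∈ Ioc (0 : ℝ) 1 :=
  ⟨div_pos (partitionFn_pos hc (hl.mul (hc.isActivity x))) (partitionFn_pos hc hl),
    div_le_one_of_le₀ (partitionFn_mul_le hc hl (hc.isActivity x)) (partitionFn_pos hc hl).le⟩

theorem insertionRatio_zero (hc : IsRepulsive c) (x : E) : insertionRatio c ν 0 x = 1 := by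
  rw [insertionRatio, zero_mul, div_self (partitionFn_pos hc .zero).ne']

theorem measurable_partitionFn_mul (hc : IsRepulsive c) (hl : Measurable l) :
    Measurable fun x => partitionFn c ν (l * c x) :=
  (((Config.measurable_weight hc.measurable).comp measurable_snd).mul
    (measurable_prod_mul hc hl)).stronglyMeasurable.integral_prod_right'.measurable

theorem measurable_insertionRatio (hc : IsRepulsive c) (hl : Measurable l) :
    Measurable (insertionRatio c ν l) :=
  (measurable_partitionFn_mul hc hl).div_const _

theorem isActivity_insertionRatio (hc : IsRepulsive c) (hl : IsActivity l) :
    IsActivity (insertionRatio c ν l) :=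
  ⟨measurable_insertionRatio hc hl.measurable, fun x =>
    Ioc_subset_Icc_self (insertionRatio_mem_Ioc hc hl x)⟩

theorem abs_weight_mul_sum_erase_le (hc : IsRepulsive c) {b : E → ℝ} {K : ℝ} (hK : 1 ≤ K)
    (hl : ∀ x, |l x| ≤ K) (hb : ∀ x, |b x| ≤ K) (X : Config E) :
    |X.weight c * ∑ i, b (X.2 i) * (X.erase i).prod l| ≤ K * (2 * K) ^ X.1 := by
  have hK0 : 0 ≤ K := zero_le_one.trans hK
  have hterm (i : Fin X.1) : |b (X.2 i) * (X.erase i).prod l| ≤ K * K ^ X.1 := by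
    rw [abs_mul]
    exact mul_le_mul (hb _) (Config.abs_prod_erase_le hK hl X i) (abs_nonneg _) hK0
  calc |X.weight c * ∑ i, b (X.2 i) * (X.erase i).prod l|
    _ ≤ |∑ i, b (X.2 i) * (X.erase i).prod l| := by
      rw [abs_mul, abs_of_nonneg (hc.weight_mem_Icc X).1]
      exact mul_le_of_le_one_left (abs_nonneg _) (hc.weight_mem_Icc X).2
    _ ≤ X.1 * (K * K ^ X.1) := by
      refine (Finset.abs_sum_le_sum_abs _ _).trans ((Finset.sum_le_sum fun i _ =>
        hterm i).trans_eq ?_)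
      simp
    _ ≤ 2 ^ X.1 * (K * K ^ X.1) := by
      gcongr
      exact_mod_cast Nat.lt_two_pow_self.le
    _ = K * (2 * K) ^ X.1 := by ring

theorem integral_weight_mul_deriv (hc : IsRepulsive c) (hl : Measurable l) {b : E → ℝ}
    (hb : Measurable b) {K : ℝ} (hlK : ∀ x, |l x| ≤ K) (hbK : ∀ x, |b x| ≤ K) (hK : 0 ≤ K) :
    ∫ X, X.weight c * ∑ i, b (X.2 i) * (X.erase i).prod l ∂freeGas ν =
      ∫ w, b w * partitionFn c ν (l * c w) ∂ν := by
  have hlc (w x : E) : |(l * c w) x| ≤ K := by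
    rw [Pi.mul_apply, abs_mul]
    exact (mul_le_of_le_one_right (abs_nonneg _) ((hc.isActivity w).abs_le_one x)).trans (hlK x)
  have hint : Integrable (fun p : E × Config E =>
      b p.1 * (p.2.weight c * p.2.prod (l * c p.1))) (ν.prod (freeGas ν)) := by
    refine integrable_prod_freeGas_of_abs_le_pow (C := K) (K := K) ((hb.comp measurable_fst).mul
      (((Config.measurable_weight hc.measurable).comp measurable_snd).mul
        (measurable_prod_mul hc hl))) hK fun p => ?_
    rw [abs_mul]
    refine mul_le_mul (hbK _) ?_ (abs_nonneg _) hK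
    rw [abs_mul, abs_of_nonneg (hc.weight_mem_Icc _).1]
    exact (mul_le_of_le_one_left (abs_nonneg _) (hc.weight_mem_Icc _).2).trans
      (Config.abs_prod_le (hlc p.1) p.2)
  rw [integral_weight_mul_sum_erase hc hl (f := fun p => b p.1) (hb.comp measurable_fst) hint,
    integral_prod _ hint]
  simp only [integral_const_mul, partitionFn]

theorem measurable_weight_mul_sum_erase (hc : IsRepulsive c) (hl : Measurable l) {b : E → ℝ}
    (hb : Measurable b) :
    Measurable fun X : Config E => X.weight c * ∑ i, b (X.2 i) * (X.erase i).prod l :=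
  (Config.measurable_weight hc.measurable).mul (measurable_sum_erase
    (G := fun p => b p.1 * p.2.prod l)
    ((hb.comp measurable_fst).mul ((Config.measurable_prod hl).comp measurable_snd)))

theorem hasDerivAt_partitionFn (hc : IsRepulsive c) {a b : E → ℝ} (ha : Measurable a)
    (hb : Measurable b) {K : ℝ} (hK : 1 ≤ K) (haK : ∀ x, |a x| ≤ K) (hbK : ∀ x, |b x| ≤ K)
    (t : ℝ) :
    HasDerivAt (fun t : ℝ => partitionFn c ν (a + t • b))
      (∫ w, b w * partitionFn c ν ((a + t • b) * c w) ∂ν) t := by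
  have hpath (s : ℝ) : Measurable (a + s • b) := ha.add (hb.const_smul s)
  let M := K * (1 + (1 + |t|))
  have hKM : K ≤ M := le_mul_of_one_le_right (by linarith) (by linarith [abs_nonneg t])
  have hM : 1 ≤ M := hK.trans hKM
  have hpathM (s : ℝ) (hs : s ∈ Metric.ball t 1) (x : E) : |(a + s • b) x| ≤ M := by
    rw [Metric.mem_ball, Real.dist_eq] at hs
    exact abs_add_smul_le haK hbK (by linarith [abs_sub_abs_le_abs_sub s t]) x
  have hpathtM := hpathM t (Metric.mem_ball_self one_pos)
  have hbM (x : E) : |b x| ≤ M := (hbK x).trans hKM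
  rw [← integral_weight_mul_deriv hc (hpath t) hb hpathtM hbM (by linarith)]
  exact (hasDerivAt_integral_of_dominated_loc_of_deriv_le
    (bound := fun X : Config E => M * (2 * M) ^ X.1) (Metric.ball_mem_nhds t one_pos)
    (.of_forall fun s => (measurable_weight_mul_prod hc (hpath s)).aestronglyMeasurable)
    (integrable_weight_mul_prod hc (hpath t) hpathtM (by linarith))
    (measurable_weight_mul_sum_erase hc (hpath t) hb).aestronglyMeasurable
    (ae_of_all _ fun X s hs => abs_weight_mul_sum_erase_le hc hM (hpathM s hs) hbM X)
    ((integrable_pow_card_freeGas (by linarith)).const_mul M)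
    (ae_of_all _ fun X s _ => (X.hasDerivAt_prod_add_smul a b s).const_mul _)).2

theorem hasDerivAt_log_partitionFn_interpolation (hc : IsRepulsive c) (hl : IsActivity l) (x : E)
    {t : ℝ} (ht : t ∈ I) :
    HasDerivAt (fun t => log (partitionFn c ν (interpolation c l x t)))
      (∫ w, l w * (1 - c x w) * insertionRatio c ν (interpolation c l x t) w ∂ν) t := by
  have hcx := hc.isActivity x
  have hcx' := hcx.one_sub
  have hderiv := hasDerivAt_partitionFn (ν := ν) hc (hl.mul hcx).measurable
    (hl.mul hcx').measurable le_rfl (hl.mul hcx).abs_le_one (hl.mul hcx').abs_le_one t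
  refine (hderiv.log
    (partitionFn_pos hc (isActivity_interpolation hc hl x ht)).ne').congr_deriv ?_
  rw [← integral_div]
  exact integral_congr_ae (ae_of_all _ fun w => mul_div_assoc _ _ _)

theorem log_insertionRatio (hc : IsRepulsive c) (hl : IsActivity l) (x : E) :
    log (insertionRatio c ν l x) = log (partitionFn c ν (interpolation c l x 0)) -
      log (partitionFn c ν (interpolation c l x 1)) := by
  rw [interpolation_zero, interpolation_one, insertionRatio,
    log_div (partitionFn_pos hc (hl.mul (hc.isActivity x))).ne' (partitionFn_pos hc hl).ne']

theorem abs_sub_le_abs_log_sub_log {p q : ℝ} (hp : p ∈ Ioc (0 : ℝ) 1) (hq : q ∈ Ioc (0 : ℝ) 1) :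
    |p - q| ≤ |log p - log q| := by
  wlog hpq : q ≤ p generalizing p q
  · rw [abs_sub_comm, abs_sub_comm (log p)]
    exact this hq hp (le_of_not_ge hpq)
  rw [abs_of_nonneg (sub_nonneg.2 hpq)]
  refine le_trans ?_ (le_abs_self _)
  have hlog := log_le_sub_one_of_pos (div_pos hq.1 hp.1)
  rw [log_div hq.1.ne' hp.1.ne', div_sub_one hp.1.ne', le_div_iff₀ hp.1] at hlog
  nlinarith [hp.2, log_le_log hq.1 hpq]

/-- Interpolating both `log Q(l, x)` and `log Q(k, x)` along the path that switches off the
interaction with `x`. -/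
theorem enorm_insertionRatio_sub_le (hc : IsRepulsive c) {k : E → ℝ} (hl : IsActivity l)
    (hk : IsActivity k) (x : E) {C : ℝ≥0∞}
    (hC : ∀ t ∈ I, ∫⁻ w, ‖l w * (1 - c x w) * insertionRatio c ν (interpolation c l x t) w -
      k w * (1 - c x w) * insertionRatio c ν (interpolation c k x t) w‖ₑ ∂ν ≤ C) :
    ‖insertionRatio c ν l x - insertionRatio c ν k x‖ₑ ≤ C := by
  obtain rfl | hCtop := eq_or_ne C ∞
  · exact le_top
  have hint {m : E → ℝ} (hm : IsActivity m) {t : ℝ} (ht : t ∈ I) :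
      Integrable (fun w => m w * (1 - c x w) * insertionRatio c ν (interpolation c m x t) w) ν :=
    ((hm.mul (hc.isActivity x).one_sub).mul
      (isActivity_insertionRatio hc (isActivity_interpolation hc hm x ht))).integrable
  have hmvt := norm_image_sub_le_of_norm_deriv_le_segment_01' (C := C.toReal)
    (fun t ht => ((hasDerivAt_log_partitionFn_interpolation (ν := ν) hc hl x ht).sub
      (hasDerivAt_log_partitionFn_interpolation (ν := ν) hc hk x ht)).hasDerivWithinAt)
    fun t ht => by
      have ht := Ico_subset_Icc_self ht
      rw [← integral_sub (hint hl ht) (hint hk ht), ← toReal_enorm]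
      exact ENNReal.toReal_mono hCtop ((enorm_integral_le_lintegral_enorm _).trans (hC t ht))
  rw [Real.enorm_eq_ofReal_abs]
  refine ENNReal.ofReal_le_of_le_toReal ((abs_sub_le_abs_log_sub_log
    (insertionRatio_mem_Ioc hc hl x) (insertionRatio_mem_Ioc hc hk x)).trans ?_)
  rw [log_insertionRatio hc hl, log_insertionRatio hc hk, sub_sub_sub_comm, abs_sub_comm]
  exact hmvt

/-! ### Screening estimates -/

/-- Iterated bounds for the influence of a point at `y` on the insertion ratio at `x`. -/
def screeningBound (c : E → E → ℝ) (ν : Measure E) (y : E) : ℕ → E → ℝ≥0∞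
  | 0, _ => 1
  | k + 1, x => ∫⁻ u, mayerKernel c x u * (mayerKernel c y u + screeningBound c ν y k u) ∂ν

theorem measurable_screeningBound (hc : IsRepulsive c) (y : E) (k : ℕ) :
    Measurable (screeningBound c ν y k) := by
  induction k with
  | zero => exact measurable_const
  | succ k ih =>
    have hsum := (measurable_mayerKernel hc).of_uncurry_left (x := y) |>.add ih
    exact ((measurable_mayerKernel hc).mul (hsum.comp measurable_snd)).lintegral_prod_right'

theorem lintegral_screeningBound_succ_le (hc : IsRepulsive c) {β : ℝ≥0∞}
    (hβ : ∀ x, ∫⁻ y, mayerKernel c x y ∂ν ≤ β) (y : E) (k : ℕ) :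
    ∫⁻ x, screeningBound c ν y (k + 1) x ∂ν ≤ β * (β + ∫⁻ x, screeningBound c ν y k x ∂ν) := by
  have hmeas : Measurable fun u => mayerKernel c y u + screeningBound c ν y k u :=
    (measurable_mayerKernel hc).of_uncurry_left.add (measurable_screeningBound hc y k)
  calc ∫⁻ x, screeningBound c ν y (k + 1) x ∂ν
    _ = ∫⁻ u, (∫⁻ x, mayerKernel c u x ∂ν) * (mayerKernel c y u + screeningBound c ν y k u) ∂ν := by
      simp only [screeningBound]
      rw [lintegral_lintegral_swap ((measurable_mayerKernel hc).mul
        (hmeas.comp measurable_snd)).aemeasurable]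
      refine lintegral_congr fun u => ?_
      simp only [mayerKernel, hc.symm _ u]
      exact lintegral_mul_const _ (measurable_mayerKernel hc).of_uncurry_left
    _ ≤ ∫⁻ u, β * (mayerKernel c y u + screeningBound c ν y k u) ∂ν :=
      lintegral_mono fun u => mul_le_mul_left (hβ u) _
    _ = β * (∫⁻ u, mayerKernel c y u ∂ν + ∫⁻ u, screeningBound c ν y k u ∂ν) := by
      rw [lintegral_const_mul _ hmeas,
        lintegral_add_left (measurable_mayerKernel hc).of_uncurry_left]
    _ ≤ β * (β + ∫⁻ x, screeningBound c ν y k x ∂ν) := by gcongr; exact hβ y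

theorem lintegral_screeningBound_le (hc : IsRepulsive c) {β : ℝ≥0∞}
    (hβ : ∀ x, ∫⁻ y, mayerKernel c x y ∂ν ≤ β) (hβ2 : β * 2 ≤ 1) (y : E) (k : ℕ) :
    ∫⁻ x, screeningBound c ν y k x ∂ν ≤ β ^ k * ν univ + β := by
  induction k with
  | zero => simp [screeningBound]
  | succ k ih =>
    calc ∫⁻ x, screeningBound c ν y (k + 1) x ∂ν
      _ ≤ β * (β + (β ^ k * ν univ + β)) :=
        (lintegral_screeningBound_succ_le hc hβ y k).trans (by gcongr)
      _ = β ^ (k + 1) * ν univ + β * 2 * β := by ring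
      _ ≤ β ^ (k + 1) * ν univ + β := by
        gcongr
        exact mul_le_of_le_one_left' hβ2

theorem enorm_one_sub_insertionRatio_le (hc : IsRepulsive c) (hl : IsActivity l) (x : E) :
    ‖1 - insertionRatio c ν l x‖ₑ ≤ ∫⁻ y, mayerKernel c x y ∂ν := by
  rw [← insertionRatio_zero (ν := ν) hc x]
  refine enorm_insertionRatio_sub_le hc .zero hl x fun t ht => lintegral_mono fun w => ?_
  have hQ := isActivity_insertionRatio (ν := ν) hc (isActivity_interpolation hc hl x ht)
  simp only [Pi.zero_apply, zero_mul, zero_sub, enorm_neg, enorm_mul]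
  change ‖l w‖ₑ * mayerKernel c x w * _ ≤ _
  calc ‖l w‖ₑ * mayerKernel c x w * ‖insertionRatio c ν (interpolation c l x t) w‖ₑ
    _ ≤ 1 * mayerKernel c x w * 1 := by
      gcongr
      exacts [hl.enorm_le_one w, hQ.enorm_le_one w]
    _ = mayerKernel c x w := by simp

theorem enorm_insertionRatio_sub_mul_le (hc : IsRepulsive c) (hl : IsActivity l) (y : E) (k : ℕ)
    (x : E) :
    ‖insertionRatio c ν l x - insertionRatio c ν (l * c y) x‖ₑ ≤ screeningBound c ν y k x := by
  have hcy := hc.isActivity y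
  induction k generalizing l x with
  | zero =>
    have hp := insertionRatio_mem_Ioc (ν := ν) hc hl x
    have hq := insertionRatio_mem_Ioc (ν := ν) hc (hl.mul hcy) x
    rw [screeningBound, Real.enorm_eq_ofReal_abs, ENNReal.ofReal_le_one]
    exact abs_le.2 ⟨by linarith [hp.1, hq.2], by linarith [hp.2, hq.1]⟩
  | succ k ih =>
    refine enorm_insertionRatio_sub_le hc hl (hl.mul hcy) x fun t ht => lintegral_mono fun w => ?_
    have hm := isActivity_interpolation hc hl x ht
    set m := interpolation c l x t
    rw [interpolation_mul]
    calc ‖l w * (1 - c x w) * insertionRatio c ν m w -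
          (l * c y) w * (1 - c x w) * insertionRatio c ν (m * c y) w‖ₑ
      _ = ‖l w‖ₑ * mayerKernel c x w * ‖(insertionRatio c ν m w - insertionRatio c ν (m * c y) w) +
          (1 - c y w) * insertionRatio c ν (m * c y) w‖ₑ := by
        rw [mayerKernel, ← enorm_mul, ← enorm_mul, Pi.mul_apply]
        congr 1
        ring
      _ ≤ 1 * mayerKernel c x w * (screeningBound c ν y k w + mayerKernel c y w * 1) := by
        refine mul_le_mul' (mul_le_mul_left (hl.enorm_le_one w) _) ((enorm_add_le _ _).trans
          (add_le_add (ih hm w) ((enorm_mul _ _).trans_le ?_)))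
        exact mul_le_mul_right
          ((isActivity_insertionRatio hc (hm.mul hcy)).enorm_le_one w) (mayerKernel c y w)
      _ = _ := by rw [one_mul, mul_one, add_comm]

theorem lintegral_enorm_insertionRatio_sub_mul_le (hc : IsRepulsive c) (hl : IsActivity l)
    {β : ℝ≥0∞} (hβ : ∀ x, ∫⁻ y, mayerKernel c x y ∂ν ≤ β) (hβ2 : β * 2 ≤ 1) (y : E) :
    ∫⁻ x, ‖insertionRatio c ν l x - insertionRatio c ν (l * c y) x‖ₑ ∂ν ≤ β := by
  have hle (k : ℕ) := (lintegral_mono (enorm_insertionRatio_sub_mul_le (ν := ν) hc hl y k)).trans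
    (lintegral_screeningBound_le hc hβ hβ2 y k)
  have hβ1 : β < 1 := by
    refine lt_of_not_ge fun h => (ENNReal.one_lt_two).not_ge ?_
    exact (le_mul_of_one_le_left' h).trans hβ2
  refine ge_of_tendsto' (x := Filter.atTop) ?_ hle
  have := (ENNReal.Tendsto.mul_const (ENNReal.tendsto_pow_atTop_nhds_zero_of_lt_one hβ1)
    (.inr (measure_ne_top ν univ))).add_const β
  simpa using this

/-! ### Covariances under the Gibbs measure -/

/-- The grand canonical Gibbs measure with pair Boltzmann factor `c` and intensity `l • ν`. -/
def gibbs (c : E → E → ℝ) (ν : Measure E) (l : E → ℝ) : Measure (Config E) :=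
  (freeGas ν).withDensity fun X => ENNReal.ofReal (X.weight c * X.prod l / partitionFn c ν l)

theorem integral_gibbs (hc : IsRepulsive c) (hl : IsActivity l) (F : Config E → ℝ) :
    ∫ X, F X ∂gibbs c ν l =
      (∫ X, X.weight c * X.prod l * F X ∂freeGas ν) / partitionFn c ν l := by
  rw [gibbs, integral_withDensity_eq_integral_toReal_smul
    ((measurable_weight_mul_prod hc hl.measurable).div_const _).ennreal_ofReal
    (ae_of_all _ fun _ => ENNReal.ofReal_lt_top), ← integral_div]
  refine integral_congr_ae (ae_of_all _ fun X => ?_)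
  simp only [smul_eq_mul]
  rw [ENNReal.toReal_ofReal
    (div_nonneg (weight_mul_prod_mem_Icc hc hl X).1 (partitionFn_pos hc hl).le)]
  ring

theorem gibbs_le_freeGas (hc : IsRepulsive c) (hl : IsActivity l) : gibbs c ν l ≤ freeGas ν := by
  refine (withDensity_mono (g := 1) (ae_of_all _ fun X => ?_)).trans_eq withDensity_one
  exact ENNReal.ofReal_le_one.2 (div_le_one_of_le₀ ((weight_mul_prod_mem_Icc hc hl X).2.trans
    (one_le_partitionFn hc hl)) (partitionFn_pos hc hl).le)

theorem isProbabilityMeasure_gibbs (hc : IsRepulsive c) (hl : IsActivity l) :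
    IsProbabilityMeasure (gibbs c ν l) := by
  have : IsFiniteMeasure (gibbs c ν l) := isFiniteMeasure_of_le _ (gibbs_le_freeGas hc hl)
  have hone := integral_gibbs (ν := ν) hc hl 1
  simp only [Pi.one_apply, mul_one, integral_const, smul_eq_mul] at hone
  rw [isProbabilityMeasure_iff_real]
  exact hone.trans (div_self (partitionFn_pos hc hl).ne')

theorem measurable_integral_gibbs_mul (hc : IsRepulsive c) (hl : IsActivity l)
    {f : E × Config E → ℝ} (hf : Measurable f) :
    Measurable fun w => ∫ X, f (w, X) ∂gibbs c ν (l * c w) := by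
  simp only [fun w => integral_gibbs (ν := ν) hc (hl.mul (hc.isActivity w))]
  have hnum := (((Config.measurable_weight hc.measurable).comp measurable_snd).mul
    (measurable_prod_mul hc hl.measurable)).mul hf
  exact hnum.stronglyMeasurable.integral_prod_right'.measurable.div
    (measurable_partitionFn_mul hc hl.measurable)

theorem integral_weight_mul_prod_mul (hc : IsRepulsive c) (hl : IsActivity l)
    (F : Config E → ℝ) :
    ∫ X, X.weight c * X.prod l * F X ∂freeGas ν =
      partitionFn c ν l * ∫ X, F X ∂gibbs c ν l := by
  rw [integral_gibbs hc hl, mul_div_cancel₀ _ (partitionFn_pos hc hl).ne']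

/-- Georgii–Nguyen–Zessin formula. -/
theorem integral_gibbs_sum_erase (hc : IsRepulsive c) (hl : IsActivity l)
    {f : E × Config E → ℝ} (hf : Measurable f) (hint : Integrable f (ν.prod (freeGas ν))) :
    ∫ X, ∑ i, f (X.2 i, X.erase i) ∂gibbs c ν l =
      ∫ w, l w * insertionRatio c ν l w * ∫ X, f (w, X) ∂gibbs c ν (l * c w) ∂ν := by
  have hint' := integrable_mul_weight_mul_prod hc hl hint
  have hinner (w : E) : ∫ X, l w * f (w, X) * (X.weight c * X.prod (l * c w)) ∂freeGas ν =
      l w * (partitionFn c ν (l * c w) * ∫ X, f (w, X) ∂gibbs c ν (l * c w)) := by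
    rw [← integral_weight_mul_prod_mul hc (hl.mul (hc.isActivity w)), ← integral_const_mul]
    refine integral_congr_ae (ae_of_all _ fun X => ?_)
    ring
  calc ∫ X, ∑ i, f (X.2 i, X.erase i) ∂gibbs c ν l
    _ = (∫ X, X.weight c * ∑ i, l (X.2 i) * f (X.2 i, X.erase i) * (X.erase i).prod l
          ∂freeGas ν) / partitionFn c ν l := by
      rw [integral_gibbs hc hl]
      congr 2 with X
      rw [mul_assoc, Finset.mul_sum]
      congr 2 with i
      rw [Config.prod_eq_mul_prod_erase l X i]
      ring
    _ = (∫ w, l w * (partitionFn c ν (l * c w) * ∫ X, f (w, X) ∂gibbs c ν (l * c w)) ∂ν) /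
          partitionFn c ν l := by
      rw [integral_weight_mul_sum_erase hc hl.measurable
        (f := fun p => l p.1 * f p) ((hl.measurable.comp measurable_fst).mul hf) hint',
        integral_prod _ hint']
      simp only [hinner]
    _ = _ := by
      rw [← integral_div]
      congr 1 with w
      rw [insertionRatio]
      ring

variable {h h₁ h₂ : E → ℝ} {B B₁ B₂ : ℝ}

theorem memLp_sum_gibbs (hc : IsRepulsive c) (hl : IsActivity l) (hh : Measurable h)
    (hB : ∀ x, |h x| ≤ B) : MemLp (Config.sum h) 2 (gibbs c ν l) :=
  (memLp_sum_freeGas hh hB).mono_measure (gibbs_le_freeGas hc hl)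

theorem integral_sum_gibbs (hc : IsRepulsive c) (hl : IsActivity l) (hh : Measurable h)
    (hB : ∀ x, |h x| ≤ B) :
    ∫ X, X.sum h ∂gibbs c ν l = ∫ w, l w * insertionRatio c ν l w * h w ∂ν := by
  have hint : Integrable h ν := .of_bound hh.aestronglyMeasurable B (ae_of_all _ hB)
  refine (integral_gibbs_sum_erase hc hl (f := fun p => h p.1) (hh.comp measurable_fst)
    (hint.comp_fst _)).trans (integral_congr_ae (ae_of_all _ fun w => ?_))
  have := isProbabilityMeasure_gibbs (ν := ν) hc (hl.mul (hc.isActivity w))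
  simp

open ProbabilityTheory

theorem covariance_sum_gibbs (hc : IsRepulsive c) (hl : IsActivity l) (hh₁ : Measurable h₁)
    (hh₂ : Measurable h₂) (hB₁ : ∀ x, |h₁ x| ≤ B₁) (hB₂ : ∀ x, |h₂ x| ≤ B₂) :
    cov[Config.sum h₁, Config.sum h₂; gibbs c ν l] =
      ∫ w, l w * insertionRatio c ν l w * (h₁ w * (h₂ w +
        (∫ X, X.sum h₂ ∂gibbs c ν (l * c w) - ∫ X, X.sum h₂ ∂gibbs c ν l))) ∂ν := by
  have := isProbabilityMeasure_gibbs (ν := ν) hc hl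
  have hL₁ := memLp_sum_gibbs (ν := ν) hc hl hh₁ hB₁
  have hL₂ := memLp_sum_gibbs (ν := ν) hc hl hh₂ hB₂
  have hint₂ : Integrable h₂ ν := .of_bound hh₂.aestronglyMeasurable B₂ (ae_of_all _ hB₂)
  set m := ∫ X, X.sum h₂ ∂gibbs c ν l
  calc cov[Config.sum h₁, Config.sum h₂; gibbs c ν l]
    _ = ∫ X, X.sum h₁ * (X.sum h₂ - m) ∂gibbs c ν l := by
      rw [covariance_eq_sub hL₁ hL₂]
      simp only [mul_sub]
      exact ((integral_sub (hL₁.integrable_mul hL₂)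
        ((hL₁.integrable one_le_two).mul_const m)).trans (by rw [integral_mul_const])).symm
    _ = ∫ X, ∑ i, h₁ (X.2 i) * ((X.erase i).sum h₂ + (h₂ (X.2 i) - m)) ∂gibbs c ν l := by
      congr 1 with X
      rw [Config.sum, Finset.sum_mul]
      congr 1 with i
      rw [Config.sum_eq_add_sum_erase h₂ X i]
      ring
    _ = ∫ w, l w * insertionRatio c ν l w *
          ∫ X, h₁ w * (X.sum h₂ + (h₂ w - m)) ∂gibbs c ν (l * c w) ∂ν :=
      integral_gibbs_sum_erase hc hl
        (f := fun p => h₁ p.1 * (p.2.sum h₂ + (h₂ p.1 - m)))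
        ((hh₁.comp measurable_fst).mul (((Config.measurable_sum hh₂).comp measurable_snd).add
          ((hh₂.comp measurable_fst).sub measurable_const)))
        ((((memLp_sum_freeGas hh₂ hB₂).integrable one_le_two |>.comp_snd ν).add
          ((hint₂.sub (integrable_const m)).comp_fst _)).bdd_mul
            (hh₁.comp measurable_fst).aestronglyMeasurable (ae_of_all _ fun p => hB₁ p.1))
    _ = _ := by
      congr 1 with w
      have hlc := hl.mul (hc.isActivity w)
      have := isProbabilityMeasure_gibbs (ν := ν) hc hlc
      have hsum := (memLp_sum_gibbs (ν := ν) hc hlc hh₂ hB₂).integrable one_le_two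
      rw [integral_const_mul, integral_add hsum (integrable_const _)]
      simp only [integral_const, probReal_univ, one_smul]
      ring

theorem enorm_mul_insertionRatio_sub_le (hc : IsRepulsive c) (hl : IsActivity l) (x y : E) :
    ‖(l * c y) x * insertionRatio c ν (l * c y) x - l x * insertionRatio c ν l x‖ₑ ≤
      mayerKernel c y x + ‖insertionRatio c ν l x - insertionRatio c ν (l * c y) x‖ₑ := by
  set Q := insertionRatio c ν l x
  set Q' := insertionRatio c ν (l * c y) x
  calc ‖(l * c y) x * Q' - l x * Q‖ₑ
    _ = ‖l x‖ₑ * ‖-((1 - c y x) * Q') - (Q - Q')‖ₑ := by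
      rw [← enorm_mul, Pi.mul_apply]
      congr 1
      ring
    _ ≤ 1 * (mayerKernel c y x * 1 + ‖Q - Q'‖ₑ) := by
      refine mul_le_mul' (hl.enorm_le_one x) (enorm_sub_le.trans (add_le_add_left ?_ _))
      rw [enorm_neg, enorm_mul]
      exact mul_le_mul_right
        ((isActivity_insertionRatio hc (hl.mul (hc.isActivity y))).enorm_le_one x) _
    _ = mayerKernel c y x + ‖Q - Q'‖ₑ := by rw [one_mul, mul_one]

variable {β : ℝ≥0}

theorem one_sub_insertionRatio_le (hc : IsRepulsive c) (hl : IsActivity l)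
    (hβ : ∀ x, ∫⁻ y, mayerKernel c x y ∂ν ≤ β) (x : E) : 1 - insertionRatio c ν l x ≤ β := by
  have h := (enorm_one_sub_insertionRatio_le hc hl x).trans (hβ x)
  rw [Real.enorm_of_nonneg (sub_nonneg.2 (insertionRatio_mem_Ioc hc hl x).2)] at h
  simpa using ENNReal.ofReal_le_iff_le_toReal (by finiteness) |>.1 h

theorem abs_integral_sum_gibbs_mul_sub_le (hc : IsRepulsive c) (hl : IsActivity l)
    (hβ : ∀ x, ∫⁻ y, mayerKernel c x y ∂ν ≤ β) (hβ2 : β * 2 ≤ 1) (hh : Measurable h)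
    (hB : ∀ x, |h x| ≤ B) (y : E) :
    |∫ X, X.sum h ∂gibbs c ν (l * c y) - ∫ X, X.sum h ∂gibbs c ν l| ≤ 2 * β * |B| := by
  have hlc := hl.mul (hc.isActivity y)
  have hint {k : E → ℝ} (hk : IsActivity k) :
      Integrable (fun w => k w * insertionRatio c ν k w * h w) ν :=
    (hk.mul (isActivity_insertionRatio hc hk)).integrable.mul_bdd hh.aestronglyMeasurable
      (ae_of_all _ hB)
  have hlint : ‖∫ X, X.sum h ∂gibbs c ν (l * c y) - ∫ X, X.sum h ∂gibbs c ν l‖ₑ ≤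
      (β + β) * ‖B‖ₑ := by
    rw [integral_sum_gibbs hc hlc hh hB, integral_sum_gibbs hc hl hh hB,
      ← integral_sub (hint hlc) (hint hl)]
    calc _
      _ ≤ ∫⁻ x, (mayerKernel c y x + ‖insertionRatio c ν l x -
            insertionRatio c ν (l * c y) x‖ₑ) * ‖B‖ₑ ∂ν := by
        refine (enorm_integral_le_lintegral_enorm _).trans (lintegral_mono fun x => ?_)
        rw [← sub_mul, enorm_mul]
        refine mul_le_mul' (enorm_mul_insertionRatio_sub_le hc hl x y) ?_
        exact enorm_le_iff_norm_le.2 ((hB x).trans (le_abs_self B))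
      _ = (∫⁻ x, mayerKernel c y x ∂ν + ∫⁻ x, ‖insertionRatio c ν l x -
            insertionRatio c ν (l * c y) x‖ₑ ∂ν) * ‖B‖ₑ := by
        rw [lintegral_mul_const' _ _ enorm_ne_top,
          lintegral_add_left (measurable_mayerKernel hc).of_uncurry_left]
      _ ≤ (β + β) * ‖B‖ₑ := by
        gcongr
        exacts [hβ y, lintegral_enorm_insertionRatio_sub_mul_le hc hl hβ (mod_cast hβ2) y]
  have := ENNReal.toReal_mono (by finiteness) hlint
  simpa [← two_mul] using this

theorem abs_mul_mul_add_sub_le {p q a b r A B β : ℝ} (hp : |p| ≤ 1) (hq : q ∈ Icc (0 : ℝ) 1)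
    (hqβ : 1 - q ≤ β) (ha : |a| ≤ A) (hb : |b| ≤ B) (hr : |r| ≤ 2 * β * B) :
    |p * q * (a * (b + r)) - p * (a * b)| ≤ 3 * β * A * B := by
  have hA : 0 ≤ A := (abs_nonneg a).trans ha
  have hβ : 0 ≤ β := (sub_nonneg.2 hq.2).trans hqβ
  have hqr : |q * r| ≤ 2 * β * B := by
    rw [abs_mul, abs_of_nonneg hq.1]
    exact (mul_le_of_le_one_left (abs_nonneg _) hq.2).trans hr
  have hqb : |(1 - q) * b| ≤ β * B := by
    rw [abs_mul, abs_of_nonneg (sub_nonneg.2 hq.2)]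
    exact mul_le_mul hqβ hb (abs_nonneg _) hβ
  calc |p * q * (a * (b + r)) - p * (a * b)|
    _ = |p| * (|a| * |q * r - (1 - q) * b|) := by
      rw [← abs_mul, ← abs_mul]
      congr 1
      ring
    _ ≤ 1 * (A * (2 * β * B + β * B)) :=
      mul_le_mul hp (mul_le_mul ha ((abs_sub _ _).trans (add_le_add hqr hqb)) (abs_nonneg _) hA)
        (by positivity) zero_le_one
    _ = 3 * β * A * B := by ring

theorem abs_covariance_sum_gibbs_sub_le (hc : IsRepulsive c) (hl : IsActivity l)
    (hβ : ∀ x, ∫⁻ y, mayerKernel c x y ∂ν ≤ β) (hβ2 : β * 2 ≤ 1) (hh₁ : Measurable h₁)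
    (hh₂ : Measurable h₂) (hB₁ : ∀ x, |h₁ x| ≤ B₁) (hB₂ : ∀ x, |h₂ x| ≤ B₂) :
    |cov[Config.sum h₁, Config.sum h₂; gibbs c ν l] - ∫ w, l w * (h₁ w * h₂ w) ∂ν| ≤
      3 * β * |B₁| * |B₂| * ν.real univ := by
  let R w := ∫ X, X.sum h₂ ∂gibbs c ν (l * c w) - ∫ X, X.sum h₂ ∂gibbs c ν l
  have hR : Measurable R := (measurable_integral_gibbs_mul hc hl
    ((Config.measurable_sum hh₂).comp measurable_snd)).sub_const _
  have hRβ (w : E) : |R w| ≤ 2 * β * |B₂| :=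
    abs_integral_sum_gibbs_mul_sub_le hc hl hβ hβ2 hh₂ hB₂ w
  have hQ := isActivity_insertionRatio (ν := ν) hc hl
  have hint₂ : Integrable h₂ ν := .of_bound hh₂.aestronglyMeasurable B₂ (ae_of_all _ hB₂)
  have hintR : Integrable R ν := .of_bound hR.aestronglyMeasurable _ (ae_of_all _ hRβ)
  have hbdd {k g : E → ℝ} (hk : IsActivity k) (hg : Integrable g ν) :
      Integrable (fun w => k w * (h₁ w * g w)) ν :=
    (hg.bdd_mul hh₁.aestronglyMeasurable (ae_of_all _ hB₁)).bdd_mul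
      hk.measurable.aestronglyMeasurable (ae_of_all _ hk.abs_le_one)
  rw [covariance_sum_gibbs hc hl hh₁ hh₂ hB₁ hB₂]
  have hsub := integral_sub (hbdd (hl.mul hQ) (hint₂.add hintR)) (hbdd hl hint₂)
  simp only [Pi.mul_apply, Pi.add_apply] at hsub
  rw [← hsub, ← Real.norm_eq_abs]
  refine norm_integral_le_of_norm_le_const (ae_of_all _ fun w => ?_)
  exact abs_mul_mul_add_sub_le (hl.abs_le_one w) (hQ.mem_Icc w)
    (one_sub_insertionRatio_le hc hl hβ w) ((hB₁ w).trans (le_abs_self _))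
    ((hB₂ w).trans (le_abs_self _)) (hRβ w)

end PartitionFunction

/-! ### Hard spheres on the torus -/

section HardSpheres

open ProbabilityTheory
open scoped ENNReal NNReal Nat

theorem pi_withDensity_ofReal {ι E : Type*} [Fintype ι] [MeasurableSpace E] {μ : Measure E}
    [SigmaFinite μ] {f : E → ℝ} (hf : Integrable f μ) (h0 : ∀ x, 0 ≤ f x) :
    (Measure.pi fun _ : ι => μ.withDensity fun x => ENNReal.ofReal (f x)) =
      (Measure.pi fun _ : ι => μ).withDensity fun X => ENNReal.ofReal (∏ i, f (X i)) := by
  have : IsFiniteMeasure (μ.withDensity fun x => ENNReal.ofReal (f x)) :=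
    isFiniteMeasure_withDensity_ofReal hf.2
  refine Measure.pi_eq fun s hs => ?_
  rw [withDensity_apply _ (.univ_pi hs), Measure.restrict_pi_pi,
    ← ofReal_integral_eq_lintegral_ofReal (Integrable.fintype_prod fun i => hf.restrict)
      (ae_of_all _ fun X => Finset.prod_nonneg fun i _ => h0 _),
    integral_fintype_prod_eq_prod (fun _ => f),
    ENNReal.ofReal_prod_of_nonneg fun i _ => integral_nonneg h0]
  refine Finset.prod_congr rfl fun i _ => ?_
  rw [withDensity_apply _ (hs i),
    ofReal_integral_eq_lintegral_ofReal hf.restrict (ae_of_all _ h0)]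

theorem pi_nnreal_smul {ι E : Type*} [Fintype ι] [MeasurableSpace E] (r : ℝ≥0) (μ : Measure E)
    [IsFiniteMeasure μ] :
    (Measure.pi fun _ : ι => r • μ) = r ^ Fintype.card ι • Measure.pi fun _ : ι => μ := by
  refine Measure.pi_eq fun s _ => ?_
  simp only [Measure.smul_apply, Measure.pi_pi, ENNReal.smul_def, smul_eq_mul,
    Finset.prod_mul_distrib, Finset.prod_const, Finset.card_univ, ENNReal.coe_pow]

theorem hasSum_integral_freeGas_smul {E : Type*} [MeasurableSpace E] {μ : Measure E}
    [IsFiniteMeasure μ] {r : ℝ≥0} {F : Config E → ℝ} (hF : Integrable F (freeGas (r • μ))) :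
    HasSum (fun N : ℕ => (r : ℝ) ^ N / N ! * ∫ x, F ⟨N, x⟩ ∂Measure.pi fun _ => μ)
      (∫ X, F X ∂freeGas (r • μ)) := by
  convert hasSum_integral_freeGas hF using 2 with N
  rw [pi_nnreal_smul, integral_smul_nnreal_measure, Fintype.card_fin, NNReal.smul_def, smul_eq_mul,
    NNReal.coe_pow]
  ring

variable {d : ℕ} {ε : ℝ}

theorem maxwellian_nonneg (v : EuclideanSpace ℝ (Fin d)) : 0 ≤ maxwellian v := by
  unfold maxwellian
  positivity

theorem continuous_maxwellian : Continuous (maxwellian (d := d)) := by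
  unfold maxwellian
  fun_prop

theorem integral_maxwellian : ∫ v : EuclideanSpace ℝ (Fin d), maxwellian v = 1 := by
  have hgauss := GaussianFourier.integral_rexp_neg_mul_sq_norm (V := EuclideanSpace ℝ (Fin d))
    (b := 1 / 2) (by norm_num)
  have hexp (v : EuclideanSpace ℝ (Fin d)) : -‖v‖ ^ 2 / 2 = -(1 / 2) * ‖v‖ ^ 2 := by ring
  simp only [maxwellian, hexp]
  rw [integral_const_mul, hgauss, finrank_euclideanSpace, Fintype.card_fin,
    show π / (1 / 2) = 2 * π by ring, ← rpow_add (by positivity),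
    show -(d : ℝ) / 2 + d / 2 = 0 by ring, rpow_zero]

theorem integrable_maxwellian : Integrable (maxwellian (d := d)) :=
  .of_integral_ne_zero (by simp [integral_maxwellian])

/-- The equilibrium law of the velocity of one particle. -/
def maxwellianMeasure (d : ℕ) : Measure (EuclideanSpace ℝ (Fin d)) :=
  volume.withDensity fun v => ENNReal.ofReal (maxwellian v)

instance : IsProbabilityMeasure (maxwellianMeasure d) where
  measure_univ := by
    rw [maxwellianMeasure, withDensity_apply _ .univ, Measure.restrict_univ,
      ← ofReal_integral_eq_lintegral_ofReal integrable_maxwellian (ae_of_all _ maxwellian_nonneg),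
      integral_maxwellian, ENNReal.ofReal_one]

instance : IsProbabilityMeasure (volume : Measure (AddCircle (1 : ℝ))) :=
  ⟨by simp [AddCircle.measure_univ]⟩

/-- The law of one particle of the ideal gas: uniform position, Maxwellian velocity. -/
def phaseLaw (d : ℕ) : Measure (Phase d) := volume.prod (maxwellianMeasure d)

instance : IsProbabilityMeasure (phaseLaw d) := by
  unfold phaseLaw
  infer_instance

theorem phaseLaw_eq_withDensity :
    phaseLaw d = volume.withDensity fun z => ENNReal.ofReal (maxwellian z.2) :=
  prod_withDensity_right continuous_maxwellian.measurable.ennreal_ofReal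

theorem measurable_maxwellian_snd : Measurable fun z : Phase d => maxwellian z.2 :=
  continuous_maxwellian.measurable.comp measurable_snd

theorem integral_phaseLaw (f : Phase d → ℝ) :
    ∫ z, f z ∂phaseLaw d = ∫ z : Phase d, f z * maxwellian z.2 := by
  rw [phaseLaw_eq_withDensity, integral_withDensity_eq_integral_toReal_smul
    measurable_maxwellian_snd.ennreal_ofReal (ae_of_all _ fun _ => ENNReal.ofReal_lt_top)]
  simp [ENNReal.toReal_ofReal (maxwellian_nonneg _), mul_comm]

theorem integral_pi_phaseLaw {N : ℕ} (f : (Fin N → Phase d) → ℝ) :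
    ∫ Z, f Z ∂Measure.pi (fun _ => phaseLaw d) =
      ∫ Z : Fin N → Phase d, (∏ i, maxwellian (Z i).2) * f Z := by
  have hmeas : Measurable fun Z : Fin N → Phase d => ∏ i, maxwellian (Z i).2 :=
    Finset.univ.measurable_fun_prod fun i _ =>
      measurable_maxwellian_snd.comp (measurable_pi_apply i)
  have hint : Integrable fun z : Phase d => maxwellian z.2 :=
    integrable_maxwellian.comp_snd (volume : Measure (Torus d))
  simp only [phaseLaw_eq_withDensity]
  rw [pi_withDensity_ofReal hint fun z => maxwellian_nonneg _,
    integral_withDensity_eq_integral_toReal_smul hmeas.ennreal_ofReal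
      (ae_of_all _ fun _ => ENNReal.ofReal_lt_top)]
  simp only [smul_eq_mul,
    ENNReal.toReal_ofReal (Finset.prod_nonneg fun _ _ => maxwellian_nonneg _)]
  rfl

theorem torusDist_comm (x y : Torus d) : torusDist x y = torusDist y x := by
  simp [torusDist, dist_comm]

theorem measurable_torusDist {α : Type*} [MeasurableSpace α] {f g : α → Torus d}
    (hf : Measurable f) (hg : Measurable g) : Measurable fun a => torusDist (f a) (g a) := by
  have hcont : Continuous fun p : Torus d × Torus d => torusDist p.1 p.2 := by
    unfold torusDist
    fun_prop
  exact hcont.measurable.comp (f := fun a => (f a, g a)) (hf.prodMk hg)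

theorem dist_le_torusDist (x y : Torus d) (i : Fin d) : dist (x i) (y i) ≤ torusDist x y :=
  le_sqrt_of_sq_le (Finset.single_le_sum (f := fun i => dist (x i) (y i) ^ 2)
    (fun _ _ => sq_nonneg _) (Finset.mem_univ i))

theorem phaseLaw_torusDist_le (x : Phase d) (hε : 0 ≤ ε) :
    phaseLaw d {y | torusDist x.1 y.1 ≤ ε} ≤ ENNReal.ofReal ((2 * ε) ^ d) := by
  have hsub : {y : Phase d | torusDist x.1 y.1 ≤ ε} ⊆
      Prod.fst ⁻¹' Set.univ.pi fun i => Metric.closedBall (x.1 i) ε := fun y hy i _ => by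
    rw [Metric.mem_closedBall, dist_comm]
    exact (dist_le_torusDist _ _ i).trans hy
  have hmeas : MeasurableSet (Set.univ.pi fun i => Metric.closedBall (x.1 i) ε) :=
    .univ_pi fun i => Metric.isClosed_closedBall.measurableSet
  calc phaseLaw d {y | torusDist x.1 y.1 ≤ ε}
    _ ≤ phaseLaw d (Prod.fst ⁻¹' Set.univ.pi fun i => Metric.closedBall (x.1 i) ε) :=
      measure_mono hsub
    _ = ∏ _i : Fin d, ENNReal.ofReal (min 1 (2 * ε)) := by
      rw [phaseLaw, measurePreserving_fst.measure_preimage hmeas.nullMeasurableSet, volume_pi_pi]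
      simp only [AddCircle.volume_closedBall]
    _ ≤ ∏ _i : Fin d, ENNReal.ofReal (2 * ε) :=
      Finset.prod_le_prod' fun _ _ => ENNReal.ofReal_le_ofReal (min_le_right _ _)
    _ = ENNReal.ofReal ((2 * ε) ^ d) := by
      rw [Finset.prod_const, Finset.card_univ, Fintype.card_fin,
        ENNReal.ofReal_pow (by positivity)]

/-- The pair Boltzmann factor of hard spheres of diameter `ε`. -/
def hardCore (ε : ℝ) (z z' : Phase d) : ℝ := if ε < torusDist z.1 z'.1 then 1 else 0

theorem isRepulsive_hardCore : IsRepulsive (hardCore ε : Phase d → Phase d → ℝ) where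
  measurable := by
    have hdist : Measurable fun p : Phase d × Phase d => torusDist p.1.1 p.2.1 :=
      measurable_torusDist (measurable_fst.comp measurable_fst) (measurable_fst.comp measurable_snd)
    exact Measurable.ite (p := fun p : Phase d × Phase d => ε < torusDist p.1.1 p.2.1)
      (measurableSet_lt measurable_const hdist) measurable_const measurable_const
  symm z z' := by rw [hardCore, hardCore, torusDist_comm]
  mem_Icc z z' := by
    unfold hardCore
    split_ifs <;> simp

theorem lintegral_mayerKernel_hardCore_le (x : Phase d) (hε : 0 ≤ ε) :
    ∫⁻ y, mayerKernel (hardCore ε) x y ∂phaseLaw d ≤ ENNReal.ofReal ((2 * ε) ^ d) := by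
  refine le_trans ?_ (phaseLaw_torusDist_le x hε)
  refine (lintegral_mono fun y => ?_).trans (lintegral_indicator_one_le _)
  by_cases h : ε < torusDist x.1 y.1 <;> simp [mayerKernel, hardCore, h, not_lt.1]

theorem weight_hardCore {N : ℕ} (Z : Fin N → Phase d) :
    Config.weight (hardCore ε) ⟨N, Z⟩ = exclInd ε fun i => (Z i).1 := by
  unfold exclInd
  split_ifs with h
  · refine Finset.prod_eq_one fun i _ => Finset.prod_eq_one fun j _ => ?_
    split_ifs with hij
    exacts [if_pos (h i j hij.ne), rfl]
  · push Not at h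
    obtain ⟨i, j, hne, hle⟩ := h
    wlog hij : i < j generalizing i j
    · exact this j i hne.symm (torusDist_comm _ _ ▸ hle) (hne.lt_or_gt.resolve_left hij)
    refine Finset.prod_eq_zero (Finset.mem_univ i) (Finset.prod_eq_zero (Finset.mem_univ j) ?_)
    rw [if_pos hij, hardCore, if_neg hle.not_gt]

theorem measurable_exclInd {N : ℕ} : Measurable (exclInd ε : (Fin N → Torus d) → ℝ) := by
  have hdist (i j : Fin N) : Measurable fun X : Fin N → Torus d => torusDist (X i) (X j) :=
    measurable_torusDist (measurable_pi_apply i) (measurable_pi_apply j)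
  have hset : MeasurableSet
      {X : Fin N → Torus d | ∀ i j, i ≠ j → ε < torusDist (X i) (X j)} :=
    measurableSet_setOfPred.2 <| .forall fun i => .forall fun j => .imp measurable_const
      (measurableSet_setOfPred.1 (measurableSet_lt measurable_const (hdist i j)))
  unfold exclInd
  exact Measurable.ite hset measurable_const measurable_const

theorem integral_exclInd (N : ℕ) : ∫ X : Fin N → Torus d, exclInd ε X =
    ∫ Z : Fin N → Phase d, exclInd ε (fun i => (Z i).1) ∂Measure.pi fun _ => phaseLaw d := by
  have hfst : MeasurePreserving (fun (Z : Fin N → Phase d) i => (Z i).1)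
      (Measure.pi fun _ => phaseLaw d) volume :=
    measurePreserving_pi _ _ fun _ => measurePreserving_fst
  rw [← hfst.map_eq, integral_map hfst.aemeasurable measurable_exclInd.aestronglyMeasurable]

/-- The intensity `μ_ε 𝓜(v) dx dv` of the ideal gas. -/
def intensity (d : ℕ) (ε : ℝ) : Measure (Phase d) := (muBG d ε).toNNReal • phaseLaw d

instance : IsFiniteMeasure (intensity d ε) := by
  unfold intensity
  infer_instance

theorem muBG_pos (d : ℕ) (hε : 0 < ε) : 0 < muBG d ε := inv_pos.2 (pow_pos hε _)

theorem hasSum_integral_freeGas_intensity (hε : 0 < ε) {F : Config (Phase d) → ℝ}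
    (hF : Integrable F (freeGas (intensity d ε))) :
    HasSum (fun N : ℕ => muBG d ε ^ N / N ! * ∫ Z, F ⟨N, Z⟩ ∂Measure.pi fun _ => phaseLaw d)
      (∫ X, F X ∂freeGas (intensity d ε)) := by
  unfold intensity at hF ⊢
  simpa only [coe_toNNReal _ (muBG_pos d hε).le] using hasSum_integral_freeGas_smul hF

theorem lintegral_mayerKernel_hardCore_intensity_le (hd : d ≠ 0) (hε : 0 < ε) (x : Phase d) :
    ∫⁻ y, mayerKernel (hardCore ε) x y ∂intensity d ε ≤ (2 ^ d * ε).toNNReal := by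
  have hscale : 2 ^ d * ε = muBG d ε * (2 * ε) ^ d := by
    obtain ⟨n, rfl⟩ := Nat.exists_eq_succ_of_ne_zero hd
    rw [muBG, Nat.succ_eq_add_one, Nat.add_sub_cancel]
    field_simp
    ring
  rw [hscale, intensity, lintegral_smul_measure, Real.toNNReal_mul (muBG_pos d hε).le,
    ENNReal.coe_mul]
  exact mul_le_mul_right (lintegral_mayerKernel_hardCore_le x hε.le) _

theorem partitionZ_eq_partitionFn (hε : 0 < ε) :
    partitionZ d ε = partitionFn (hardCore ε) (intensity d ε) 1 := by
  have hint := IsActivity.one.integrable_weight_mul_prod (ν := intensity d ε)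
    isRepulsive_hardCore (c := hardCore ε)
  rw [partitionFn, ← (hasSum_integral_freeGas_intensity hε hint).tsum_eq]
  simp only [partitionZ, integral_exclInd, Config.prod_one, mul_one, weight_hardCore]

theorem gceExp_eq_integral_gibbs (hε : 0 < ε) {F : Config (Phase d) → ℝ}
    (hF : Integrable F (freeGas (intensity d ε))) :
    gceExp d ε (fun N Z => F ⟨N, Z⟩) = ∫ X, F X ∂gibbs (hardCore ε) (intensity d ε) 1 := by
  have hint : Integrable (fun X => X.weight (hardCore ε) * X.prod 1 * F X)
      (freeGas (intensity d ε)) := by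
    refine hF.bdd_mul (c := 1) (measurable_weight_mul_prod isRepulsive_hardCore
      measurable_const).aestronglyMeasurable (ae_of_all _ fun X => ?_)
    have hX := weight_mul_prod_mem_Icc (isRepulsive_hardCore (ε := ε)) .one X
    exact (norm_of_nonneg hX.1).trans_le hX.2
  rw [integral_gibbs isRepulsive_hardCore .one, gceExp, partitionZ_eq_partitionFn hε,
    ← (hasSum_integral_freeGas_intensity hε hint).tsum_eq, inv_mul_eq_div]
  simp only [integral_pi_phaseLaw, Config.prod_one, mul_one, weight_hardCore, mul_left_comm,
    mul_assoc]

variable {h h₁ h₂ : Phase d → ℝ} {B B₁ B₂ : ℝ}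

theorem fluctField_eq (hε : 0 < ε) (hh : Measurable h) (hB : ∀ z, |h z| ≤ B)
    (X : Config (Phase d)) :
    fluctField d ε h X.1 X.2 = √(muBG d ε) * (muBG d ε)⁻¹ *
      (X.sum h - ∫ Y, Y.sum h ∂gibbs (hardCore ε) (intensity d ε) 1) := by
  have hint := ((memLp_sum_freeGas (ν := intensity d ε) hh hB).integrable one_le_two).const_mul
    (muBG d ε)⁻¹
  have hmean := gceExp_eq_integral_gibbs hε hint
  rw [integral_const_mul] at hmean
  rw [fluctField, mul_assoc, mul_sub (muBG d ε)⁻¹, ← hmean]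
  rfl

theorem gceExp_fluctField_mul_fluctField (hε : 0 < ε) (hh₁ : Measurable h₁)
    (hh₂ : Measurable h₂) (hB₁ : ∀ z, |h₁ z| ≤ B₁) (hB₂ : ∀ z, |h₂ z| ≤ B₂) :
    gceExp d ε (fun N Z => fluctField d ε h₁ N Z * fluctField d ε h₂ N Z) =
      (muBG d ε)⁻¹ * cov[Config.sum h₁, Config.sum h₂;
        gibbs (hardCore ε) (intensity d ε) 1] := by
  have hμ := muBG_pos d hε
  have hsq : √(muBG d ε) * (muBG d ε)⁻¹ * (√(muBG d ε) * (muBG d ε)⁻¹) = (muBG d ε)⁻¹ := by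
    rw [mul_mul_mul_comm, mul_self_sqrt hμ.le, mul_inv_cancel_left₀ hμ.ne']
  have hprod (X : Config (Phase d)) : fluctField d ε h₁ X.1 X.2 * fluctField d ε h₂ X.1 X.2 =
      (muBG d ε)⁻¹ * ((X.sum h₁ - ∫ Y, Y.sum h₁ ∂gibbs (hardCore ε) (intensity d ε) 1) *
        (X.sum h₂ - ∫ Y, Y.sum h₂ ∂gibbs (hardCore ε) (intensity d ε) 1)) := by
    rw [fluctField_eq hε hh₁ hB₁, fluctField_eq hε hh₂ hB₂, mul_mul_mul_comm, hsq]
  have hcentred {h : Phase d → ℝ} {B : ℝ} (hh : Measurable h) (hB : ∀ z, |h z| ≤ B) (m : ℝ) :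
      MemLp (fun X => Config.sum h X - m) 2 (freeGas (intensity d ε)) :=
    (memLp_sum_freeGas hh hB).sub (memLp_const m)
  rw [covariance, ← integral_const_mul]
  simp only [← hprod]
  refine gceExp_eq_integral_gibbs hε
    (F := fun X => fluctField d ε h₁ X.1 X.2 * fluctField d ε h₂ X.1 X.2) ?_
  simp only [hprod]
  exact ((hcentred hh₁ hB₁ _).integrable_mul (hcentred hh₂ hB₂ _)).const_mul _

theorem abs_gceExp_fluctField_mul_fluctField_sub_le (hd : d ≠ 0) (hε : 0 < ε)
    (hε2 : 2 ^ d * ε * 2 ≤ 1) (hh₁ : Measurable h₁) (hh₂ : Measurable h₂)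
    (hB₁ : ∀ z, |h₁ z| ≤ B₁) (hB₂ : ∀ z, |h₂ z| ≤ B₂) :
    |gceExp d ε (fun N Z => fluctField d ε h₁ N Z * fluctField d ε h₂ N Z) -
      ∫ z : Phase d, h₁ z * h₂ z * maxwellian z.2| ≤ 3 * (2 ^ d * ε) * |B₁| * |B₂| := by
  have hμ := muBG_pos d hε
  have hβ2 : (2 ^ d * ε).toNNReal * 2 ≤ 1 := by
    rw [← NNReal.coe_le_coe]
    simpa [coe_toNNReal _ (show (0 : ℝ) ≤ 2 ^ d * ε by positivity)] using hε2
  have hbound := abs_covariance_sum_gibbs_sub_le isRepulsive_hardCore .one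
    (lintegral_mayerKernel_hardCore_intensity_le hd hε) hβ2 hh₁ hh₂ hB₁ hB₂
  have hmean : ∫ z, (1 : Phase d → ℝ) z * (h₁ z * h₂ z) ∂intensity d ε =
      muBG d ε * ∫ z : Phase d, h₁ z * h₂ z * maxwellian z.2 := by
    simp only [Pi.one_apply, one_mul, intensity, integral_smul_nnreal_measure, integral_phaseLaw,
      NNReal.smul_def, smul_eq_mul, coe_toNNReal _ hμ.le]
  have hmass : (intensity d ε).real Set.univ = muBG d ε := by
    simp [intensity, measureReal_def, hμ.le]
  rw [hmean, hmass, coe_toNNReal _ (by positivity)] at hbound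
  rw [gceExp_fluctField_mul_fluctField hε hh₁ hh₂ hB₁ hB₂, ← mul_le_mul_iff_left₀ hμ]
  refine le_trans (le_of_eq ?_) hbound
  nth_rewrite 2 [← abs_of_pos hμ]
  rw [← abs_mul, sub_mul, mul_comm _ (muBG d ε), mul_inv_cancel_left₀ hμ.ne', mul_comm (muBG d ε)]

theorem covariance_convergence_general (d : ℕ) (hd : d ≠ 0)
    (h₁ h₂ : Phase d → ℝ) (hm₁ : Measurable h₁) (hm₂ : Measurable h₂)
    (hb₁ : ∃ B : ℝ, ∀ z, |h₁ z| ≤ B) (hb₂ : ∃ B : ℝ, ∀ z, |h₂ z| ≤ B) :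
    Filter.Tendsto
      (fun ε : ℝ =>
        gceExp d ε (fun N Z => fluctField d ε h₁ N Z * fluctField d ε h₂ N Z))
      (nhdsWithin 0 (Set.Ioi 0))
      (nhds (∫ z : Phase d, h₁ z * h₂ z * maxwellian z.2)) := by
  obtain ⟨B₁, hB₁⟩ := hb₁
  obtain ⟨B₂, hB₂⟩ := hb₂
  have hlim {a : ℝ → ℝ} (ha : Continuous a) (ha0 : a 0 = 0) :
      Filter.Tendsto a (nhdsWithin 0 (Set.Ioi 0)) (nhds 0) :=
    (ha.tendsto' 0 0 ha0).mono_left nhdsWithin_le_nhds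
  have hsmall := hlim (a := fun ε => 2 ^ d * ε * 2) (by fun_prop) (by simp)
  rw [tendsto_iff_dist_tendsto_zero]
  refine squeeze_zero' (.of_forall fun _ => dist_nonneg) ?_
    (hlim (a := fun ε => 3 * (2 ^ d * ε) * |B₁| * |B₂|) (by fun_prop) (by simp))
  filter_upwards [self_mem_nhdsWithin, hsmall.eventually_le_const zero_lt_one] with ε hε hε2
  exact abs_gceExp_fluctField_mul_fluctField_sub_le hd hε hε2 hm₁ hm₂ hB₁ hB₂

end HardSpheres

end

/-- Convergence of the equal-time covariance of the equilibrium fluctuation field in the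
Boltzmann–Grad limit `ε → 0⁺`:
`𝔼^eq_ε[ζ^{ε,eq}(h⁽¹⁾) ζ^{ε,eq}(h⁽²⁾)] → ∫ h⁽¹⁾(z) h⁽²⁾(z) 𝓜(v) dz`. -/
theorem covariance_convergence (d : ℕ) (hd : 2 ≤ d)
    (h₁ h₂ : Phase d → ℝ) (hm₁ : Measurable h₁) (hm₂ : Measurable h₂)
    (hb₁ : ∃ B : ℝ, ∀ z, |h₁ z| ≤ B) (hb₂ : ∃ B : ℝ, ∀ z, |h₂ z| ≤ B) :
    Filter.Tendsto
      (fun ε : ℝ =>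
        gceExp d ε (fun N Z => fluctField d ε h₁ N Z * fluctField d ε h₂ N Z))
      (nhdsWithin 0 (Set.Ioi 0))
      (nhds (∫ z : Phase d, h₁ z * h₂ z * maxwellian z.2)) := by
  exact covariance_convergence_general d (by lia) h₁ h₂ hm₁ hm₂ hb₁ hb₂
end
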